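/- For each κ ≥ 20 there is a constant C(κ) such that for each integer ℓ₀ ≥ C(κ) there exist K = K(κ,ℓ₀) ≥ 100 and constants c₁ = c₁(κ,ℓ₀), c₂ = c₂(κ,ℓ₀) ∈ (0,1) with the following property: for every integer L₀ ≥ C'(κ,ℓ₀) (for a suitable constant C'(κ,ℓ₀)), if the families F and H_n (n ≥ 1) satisfy (C1) and (C2), together with the bounds P[complement of F_{0,x}] ≤ c₁ for every x ∈ 𝕃₀ and P[complement of H_{n,x}] ≤ c₂·2^{−2^n} for every n ≥ 1 and x ∈ 𝕃_n, then P[𝒢_{n,x}] ≥ 1 − 2^{−2^n} for every n ≥ 0 and every x ∈ 𝕃_n. -/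

import Mathlib

open MeasureTheory ProbabilityTheory Filter Set

namespace GFFperc

noncomputable section

/-- The lattice `ℤ^d`. -/
abbrev V (d : ℕ) := Fin d → ℤ

/-- Nearest-neighbour adjacency on `ℤ^d`. -/
def adj {d : ℕ} (x y : V d) : Prop := (∑ i, (x i - y i).natAbs) = 1

/-- `ℓ∞` distance between two points. -/
def dinf {d : ℕ} (x y : V d) : ℕ := Finset.univ.sup fun i => (x i - y i).natAbs

/-- `A` and `B` are joined by a nearest-neighbour path contained in `S`. -/
def ConnIn {d : ℕ} (S A B : Set (V d)) : Prop :=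
  ∃ (n : ℕ) (γ : ℕ → V d), γ 0 ∈ A ∧ γ n ∈ B ∧ (∀ k, k ≤ n → γ k ∈ S) ∧
    ∀ k, k < n → adj (γ k) (γ (k + 1))

/-- A set is connected: any two of its points are joined inside it. -/
def IsConnSet {d : ℕ} (S : Set (V d)) : Prop := ∀ x ∈ S, ∀ y ∈ S, ConnIn S {x} {y}

/-- The connected component of `x` in `S`. -/
def comp {d : ℕ} (S : Set (V d)) (x : V d) : Set (V d) := {y | ConnIn S {x} {y}}

/-- Box of (real) radius `r` centered at `x`. -/
def boxAt {d : ℕ} (x : V d) (r : ℝ) : Set (V d) := {y | ∀ i, |(y i : ℝ) - (x i : ℝ)| ≤ r}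

def box (d : ℕ) (r : ℝ) : Set (V d) := boxAt (0 : V d) r

/-- Inner vertex boundary of the box of radius `r` centered at `x`. -/
def bdryAt {d : ℕ} (x : V d) (r : ℝ) : Set (V d) :=
  {y | y ∈ boxAt x r ∧ ∃ z, z ∉ boxAt x r ∧ adj y z}

def bdry (d : ℕ) (r : ℝ) : Set (V d) := bdryAt (0 : V d) r

/-- `A` is connected to infinity within `S`. -/
def ConnToInf {d : ℕ} (S A : Set (V d)) : Prop := ∀ R : ℕ, 1 ≤ R → ConnIn S A (bdry d R)

/-- The `ℓ∞`-diameter of `S` is at least `r`. -/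
def diamGE {d : ℕ} (S : Set (V d)) (r : ℝ) : Prop := ∃ x ∈ S, ∃ y ∈ S, r ≤ (dinf x y : ℝ)

def unitV (d : ℕ) (i : Fin d) : V d := fun j => if j = i then 1 else 0

/-- `k`-step transition probabilities of simple random walk on `ℤ^d`. -/
def srwP (d : ℕ) : ℕ → V d → V d → ℝ
  | 0, x, y => if x = y then 1 else 0
  | (k + 1), x, y =>
      (1 / (2 * d)) * ∑ i : Fin d, (srwP d k (x + unitV d i) y + srwP d k (x - unitV d i) y)

/-- Green function of simple random walk on `ℤ^d`. -/
def green (d : ℕ) (x y : V d) : ℝ := ∑' k : ℕ, srwP d k x y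

/-- `ℓ`-step transition kernel of the lazy simple random walk on `ℤ^d`. -/
def lazyP (d : ℕ) : ℕ → V d → V d → ℝ
  | 0, x, y => if x = y then 1 else 0
  | (k + 1), x, y =>
      (1 / 2) * lazyP d k x y +
        (1 / (4 * d)) * ∑ i : Fin d, (lazyP d k (x + unitV d i) y + lazyP d k (x - unitV d i) y)

/-- `φ` is a centered Gaussian field with covariance function `C`: every finite linear
combination is a centered Gaussian variable with the corresponding variance. -/
def IsCGF {Ω : Type*} [MeasurableSpace Ω] {d : ℕ} (P : Measure Ω)
    (φ : V d → Ω → ℝ) (C : V d → V d → ℝ) : Prop :=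
  (∀ x, Measurable (φ x)) ∧
    ∀ (s : Finset (V d)) (a : V d → ℝ),
      Measure.map (fun ω => ∑ x ∈ s, a x * φ x ω) P =
        gaussianReal 0 (Real.toNNReal (∑ x ∈ s, ∑ y ∈ s, a x * a y * C x y))

/-- `φ` is a Gaussian free field on `ℤ^d`. -/
def IsGFF {Ω : Type*} [MeasurableSpace Ω] {d : ℕ} (P : Measure Ω) (φ : V d → Ω → ℝ) : Prop :=
  IsCGF P φ (green d)

/-- The level set `{φ ≥ h}`. -/
def lvl {d : ℕ} {Ω : Type*} (φ : V d → Ω → ℝ) (h : ℝ) (ω : Ω) : Set (V d) := {x | h ≤ φ x ω}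

/-- The whole field, as one random variable with values in `V d → ℝ`. -/
def proc {Ω : Type*} {d : ℕ} (φ : V d → Ω → ℝ) : Ω → V d → ℝ := fun ω x => φ x ω

/-- The critical parameter `h_*`. -/
def hStar (d : ℕ) {Ω : Type*} [MeasurableSpace Ω] (P : Measure Ω) (φ : V d → Ω → ℝ) : ℝ :=
  sInf {h : ℝ | P {ω | ConnToInf (lvl φ h ω) {(0 : V d)}} = 0}

/-- The critical parameter `h_{**}`. -/
def hStarStar (d : ℕ) {Ω : Type*} [MeasurableSpace Ω] (P : Measure Ω) (φ : V d → Ω → ℝ) : ℝ :=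
  sInf {h : ℝ |
    (⨅ R : ℕ, P {ω | ConnIn (lvl φ h ω) (box d ((R : ℝ) + 1)) (bdry d (2 * ((R : ℝ) + 1)))}) = 0}

/-- `u(R) = exp((log R)^{1/3})`. -/
def ufn (R : ℝ) : ℝ := Real.exp (Real.log R ^ ((1 : ℝ) / 3))

def tildeSet (d : ℕ) {Ω : Type*} [MeasurableSpace Ω] (P : Measure Ω) (φ : V d → Ω → ℝ) :
    Set ℝ :=
  {h : ℝ |
    (⨅ R : ℕ, ENNReal.ofReal (((R : ℝ) + 1) ^ d) *
        P {ω | ¬ ConnIn (lvl φ h ω) (box d (ufn ((R : ℝ) + 1))) (bdry d ((R : ℝ) + 1))}) = 0}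

/-- The critical parameter `h̃`. -/
def hTilde (d : ℕ) {Ω : Type*} [MeasurableSpace Ω] (P : Measure Ω) (φ : V d → Ω → ℝ) : ℝ :=
  sSup (tildeSet d P φ)

/-- The event `Exist(R,α)`. -/
def ExistEv (d : ℕ) {Ω : Type*} (φ : V d → Ω → ℝ) (R : ℕ) (α : ℝ) : Set Ω :=
  {ω | ∃ x ∈ lvl φ α ω ∩ box d (R : ℝ),
    diamGE (comp (lvl φ α ω ∩ box d (R : ℝ)) x) ((R : ℝ) / 5)}

/-- The event `Unique(R,α)`. -/
def UniqueEv (d : ℕ) {Ω : Type*} (φ : V d → Ω → ℝ) (R : ℕ) (α : ℝ) : Set Ω :=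
  {ω | ∀ x ∈ lvl φ α ω ∩ box d (R : ℝ), ∀ y ∈ lvl φ α ω ∩ box d (R : ℝ),
    diamGE (comp (lvl φ α ω ∩ box d (R : ℝ)) x) ((R : ℝ) / 10) →
    diamGE (comp (lvl φ α ω ∩ box d (R : ℝ)) y) ((R : ℝ) / 10) →
    ConnIn (lvl φ α ω ∩ box d (2 * (R : ℝ))) {x} {y}}

/-- `φ` strongly percolates up to level `h`. -/
def StronglyPerc (d : ℕ) {Ω : Type*} [MeasurableSpace Ω] (P : Measure Ω)
    (φ : V d → Ω → ℝ) (h : ℝ) : Prop :=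
  ∃ c : ℝ, 0 < c ∧ ∃ ρ : ℝ, ρ ∈ Set.Ioc (0 : ℝ) 1 ∧
    ∀ α : ℝ, α ≤ h → ∀ R : ℕ, 1 ≤ R →
      ENNReal.ofReal (1 - Real.exp (-c * (R : ℝ) ^ ρ)) ≤ P (ExistEv d φ R α) ∧
      ENNReal.ofReal (1 - Real.exp (-c * (R : ℝ) ^ ρ)) ≤ P (UniqueEv d φ R α)

/-- The critical parameter `h̄`. -/
def hBar (d : ℕ) {Ω : Type*} [MeasurableSpace Ω] (P : Measure Ω) (φ : V d → Ω → ℝ) : ℝ :=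
  sSup {h : ℝ | StronglyPerc d P φ h}


/-- Box with integer radius `r` centered at `x`. -/
def boxI {d : ℕ} (x : V d) (r : ℕ) : Set (V d) := {y | ∀ i, (y i - x i).natAbs ≤ r}

/-- Inner vertex boundary of `boxI x r`. -/
def bdryI {d : ℕ} (x : V d) (r : ℕ) : Set (V d) :=
  {y | y ∈ boxI x r ∧ ∃ z, z ∉ boxI x r ∧ adj y z}

/-- The scales `L_n = ℓ₀^n L₀`. -/
def Lsc (ℓ₀ L₀ n : ℕ) : ℕ := ℓ₀ ^ n * L₀

/-- The renormalised lattice `𝕃_n = (2L_n+1)ℤ^d`. -/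
def latt (d ℓ₀ L₀ n : ℕ) : Set (V d) := {x | ∀ i, ((2 * Lsc ℓ₀ L₀ n + 1 : ℕ) : ℤ) ∣ x i}

/-- The `ℓ∞`-distance between the sets `A` and `B` is at least `r`. -/
def setDistGE {d : ℕ} (A B : Set (V d)) (r : ℕ) : Prop := ∀ a ∈ A, ∀ b ∈ B, r ≤ dinf a b

/-- `Σ_n` centered at `x₀` (with `⌊8.5 κ L_n⌋ = 17 κ L_n / 2`). -/
def SgAt (d ℓ₀ L₀ κ : ℕ) (n : ℕ) (x₀ : V d) : Set (V d) :=
  boxI x₀ (9 * κ * Lsc ℓ₀ L₀ n) \ boxI x₀ (17 * κ * Lsc ℓ₀ L₀ n / 2)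

/-- `Λ_n` centered at `x₀`; `annulus` selects which of the two admissible choices is used. -/
def LamAt (d ℓ₀ L₀ κ : ℕ) (annulus : Bool) (n : ℕ) (x₀ : V d) : Set (V d) :=
  if annulus then boxI x₀ (10 * κ * Lsc ℓ₀ L₀ n) \ boxI x₀ (κ * Lsc ℓ₀ L₀ n)
  else boxI x₀ (10 * κ * Lsc ℓ₀ L₀ n)

/-- Definition 2.1: a bridge between `S₁` and `S₂` inside `Sg`, encoded as the finite set of
pairs `(m, x)` labelling the `m`-boxes `B_{L_m}(x)` constituting it. -/
structure IsBridge (d ℓ₀ L₀ κ K : ℕ) (n : ℕ) (Sg S₁ S₂ : Set (V d))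
    (ℬ : Finset (ℕ × V d)) : Prop where
  /-- B1: each element is an `m`-box, `0 ≤ m ≤ n`, included in `Sg`. -/
  boxes : ∀ b ∈ ℬ, b.1 ≤ n ∧ b.2 ∈ latt d ℓ₀ L₀ b.1 ∧ boxI b.2 (Lsc ℓ₀ L₀ b.1) ⊆ Sg
  /-- B1: the union of the boxes is connected. -/
  conn : IsConnSet (⋃ b ∈ ℬ, boxI b.2 (Lsc ℓ₀ L₀ b.1))
  /-- B2. -/
  ends : ∃ b₁ ∈ ℬ, ∃ b₂ ∈ ℬ, b₁.1 = 0 ∧ b₂.1 = 0 ∧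
    (boxI b₁.2 (Lsc ℓ₀ L₀ 0) ∩ S₁).Nonempty ∧ (boxI b₂.2 (Lsc ℓ₀ L₀ 0) ∩ S₂).Nonempty ∧
    ∀ b ∈ ℬ, b ≠ b₁ → b ≠ b₂ → boxI b.2 (Lsc ℓ₀ L₀ b.1) ∩ (S₁ ∪ S₂) = ∅
  /-- B3. -/
  far : ∀ b ∈ ℬ, 1 ≤ b.1 →
    setDistGE (boxI b.2 (Lsc ℓ₀ L₀ b.1)) (S₁ ∪ S₂) (κ * Lsc ℓ₀ L₀ b.1)
  /-- B4. -/
  count : ∀ m : ℕ, (ℬ.filter fun b => b.1 = m).card ≤ 2 * K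

/-- Definition 2.2 (conditions G1 and G2): the collection of boxes `ℬ` is good. -/
def GoodCol {Ω : Type*} (d ℓ₀ L₀ : ℕ) (F : V d → Set Ω) (H : ℕ → V d → Set Ω)
    (ℬ : Finset (ℕ × V d)) (ω : Ω) : Prop :=
  (∀ b ∈ ℬ, b.1 = 0 → ω ∈ F b.2) ∧
    ∀ b ∈ ℬ, ∀ j : ℕ, max b.1 1 ≤ j →
      ∀ y ∈ latt d ℓ₀ L₀ j, b.2 ∈ boxI y (Lsc ℓ₀ L₀ j) → ω ∈ H j y

/-- A set `S` is admissible (relative to the center `x₀` and scale `n`). -/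
def AdmissibleAt (d ℓ₀ L₀ κ : ℕ) (n : ℕ) (x₀ : V d) (S : Set (V d)) : Prop :=
  (∀ x ∈ S, (comp S x ∩ bdryI x₀ (10 * κ * Lsc ℓ₀ L₀ n)).Nonempty) ∧
    ∃ x ∈ S, (comp S x ∩ boxI x₀ (8 * κ * Lsc ℓ₀ L₀ n)).Nonempty

/-- The event `𝒢_{n,x₀}`: between every pair of admissible sets there is a good bridge
inside `x₀ + Σ_n`. -/
def GEvent {Ω : Type*} (d ℓ₀ L₀ κ K : ℕ) (F : V d → Set Ω) (H : ℕ → V d → Set Ω)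
    (annulus : Bool) (n : ℕ) (x₀ : V d) : Set Ω :=
  {ω | ∀ S₁ S₂ : Set (V d),
    S₁ ⊆ LamAt d ℓ₀ L₀ κ annulus n x₀ → S₂ ⊆ LamAt d ℓ₀ L₀ κ annulus n x₀ →
    AdmissibleAt d ℓ₀ L₀ κ n x₀ S₁ → AdmissibleAt d ℓ₀ L₀ κ n x₀ S₂ →
    ∃ ℬ : Finset (ℕ × V d),
      IsBridge d ℓ₀ L₀ κ K n (SgAt d ℓ₀ L₀ κ n x₀) S₁ S₂ ℬ ∧
        GoodCol d ℓ₀ L₀ F H ℬ ω}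

/-- Condition C1: the families `F, H₁, H₂, …` are mutually independent. -/
def CondC1 {Ω : Type*} [MeasurableSpace Ω] (d ℓ₀ L₀ : ℕ) (P : Measure Ω)
    (F : V d → Set Ω) (H : ℕ → V d → Set Ω) : Prop :=
  iIndep (fun n : ℕ => MeasurableSpace.generateFrom
    (if n = 0 then {A | ∃ x ∈ latt d ℓ₀ L₀ 0, A = F x}
     else {A | ∃ x ∈ latt d ℓ₀ L₀ n, A = H n x})) P

/-- Condition C2: events indexed by `κ/2`-separated points are independent. -/
def CondC2 {Ω : Type*} [MeasurableSpace Ω] (d ℓ₀ L₀ κ : ℕ) (P : Measure Ω)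
    (F : V d → Set Ω) (H : ℕ → V d → Set Ω) : Prop :=
  ∀ U : Finset (V d), (∀ u ∈ U, ∀ v ∈ U, u ≠ v → κ ≤ 2 * dinf u v) →
    iIndepSet (fun u : U => F fun i => (2 * (Lsc ℓ₀ L₀ 0 : ℤ) + 1) * u.1 i) P ∧
      ∀ n : ℕ, 1 ≤ n →
        iIndepSet (fun u : U => H n fun i => (2 * (Lsc ℓ₀ L₀ n : ℤ) + 1) * u.1 i) P

section basics
variable {d : ℕ}

lemma dinf_le_iff {x y : V d} {r : ℕ} : dinf x y ≤ r ↔ ∀ i, (x i - y i).natAbs ≤ r := by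
  unfold dinf; simp [Finset.sup_le_iff]

lemma le_dinf (x y : V d) (i : Fin d) : (x i - y i).natAbs ≤ dinf x y :=
  dinf_le_iff.1 le_rfl i

lemma exists_le_of_le_dinf {x y : V d} {r : ℕ} (hr : 0 < r) (h : r ≤ dinf x y) :
    ∃ i, r ≤ (x i - y i).natAbs := by
  by_contra hc
  push Not at hc
  have : dinf x y ≤ r - 1 := dinf_le_iff.2 fun i => by have := hc i; omega
  omega

lemma dinf_comm (x y : V d) : dinf x y = dinf y x := by
  unfold dinf; congr 1; funext i; omega

lemma dinf_tri (x y z : V d) : dinf x z ≤ dinf x y + dinf y z := by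
  refine dinf_le_iff.2 fun i => ?_
  have := le_dinf x y i; have := le_dinf y z i; omega

lemma dinf_self (x : V d) : dinf x x = 0 := by
  have : dinf x x ≤ 0 := dinf_le_iff.2 fun i => by simp
  omega

lemma mem_boxI {x y : V d} {r : ℕ} : y ∈ boxI x r ↔ dinf y x ≤ r := by
  rw [dinf_le_iff]; rfl

lemma adj_comm {x y : V d} (h : adj x y) : adj y x := by
  unfold adj at *; rw [← h]; congr 1; funext i; omega

lemma adj_dinf {x y : V d} (h : adj x y) : dinf x y ≤ 1 := by
  refine dinf_le_iff.2 fun i => ?_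
  unfold adj at h
  rw [← h]
  exact Finset.single_le_sum (f := fun i => (x i - y i).natAbs) (fun _ _ => Nat.zero_le _)
    (Finset.mem_univ i)

lemma adj_add_unit (x : V d) (i : Fin d) : adj x (x + unitV d i) := by
  unfold adj unitV
  rw [Finset.sum_eq_single i] <;> simp +contextual

/-- reachability inside a set -/
def Rch (S : Set (V d)) (a b : V d) : Prop :=
  a ∈ S ∧ Relation.ReflTransGen (fun u v => adj u v ∧ u ∈ S ∧ v ∈ S) a b

lemma Rch.trans {S : Set (V d)} {a b c : V d} (h : Rch S a b) (h' : Rch S b c) : Rch S a c :=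
  ⟨h.1, h.2.trans h'.2⟩

lemma Rch.right {S : Set (V d)} {a b : V d} (h : Rch S a b) : b ∈ S := by
  obtain ⟨h1, h2⟩ := h
  induction h2 with
  | refl => exact h1
  | tail _ h _ => exact h.2.2

lemma Rch.symm {S : Set (V d)} {a b : V d} (h : Rch S a b) : Rch S b a := by
  refine ⟨h.right, ?_⟩
  obtain ⟨_, this⟩ := h
  induction this with
  | refl => exact .refl
  | tail _ h ih => exact .head ⟨adj_comm h.1, h.2.2, h.2.1⟩ ih

lemma Rch.mono {S S' : Set (V d)} (hS : S ⊆ S') {a b : V d} (h : Rch S a b) : Rch S' a b :=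
  ⟨hS h.1, Relation.ReflTransGen.mono (fun _ _ h => ⟨h.1, hS h.2.1, hS h.2.2⟩) _ _ h.2⟩

lemma Rch.refl {S : Set (V d)} {a : V d} (h : a ∈ S) : Rch S a a := ⟨h, .refl⟩

lemma Rch.single {S : Set (V d)} {a b : V d} (ha : a ∈ S) (hb : b ∈ S) (h : adj a b) :
    Rch S a b := ⟨ha, .single ⟨h, ha, hb⟩⟩

lemma connIn_iff {S : Set (V d)} {a b : V d} : ConnIn S {a} {b} ↔ Rch S a b := by
  constructor
  · rintro ⟨n, γ, h0, hn, hS, hadj⟩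
    simp only [mem_singleton_iff] at h0 hn
    subst h0; subst hn
    have : ∀ k ≤ n, Rch S (γ 0) (γ k) := by
      intro k
      induction k with
      | zero => intro _; exact .refl (hS 0 (by omega))
      | succ k ih =>
        intro hk
        exact (ih (by omega)).trans (.single (hS k (by omega)) (hS _ hk) (hadj k (by omega)))
    exact this n le_rfl
  · rintro ⟨ha, h⟩
    induction h with
    | refl => exact ⟨0, fun _ => a, rfl, rfl, fun _ _ => ha, fun k hk => by omega⟩
    | @tail b c h1 h ih =>
      obtain ⟨n, γ, h0, hn, hS, hadj⟩ := ih
      refine ⟨n + 1, fun k => if k ≤ n then γ k else c, ?_, ?_, ?_, ?_⟩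
      · simpa using h0
      · simp
      · intro k hk
        by_cases hk' : k ≤ n
        · simp [hk', hS k hk']
        · simp [hk', h.2.2]
      · intro k hk
        have hk' : k ≤ n := by omega
        by_cases hk2 : k + 1 ≤ n
        · simp only [hk', hk2, if_true]; exact hadj k (by omega)
        · have : k = n := by omega
          subst this
          simp only [mem_singleton_iff] at hn
          simp [hn, h.1]

/-- intermediate value along a path -/
lemma Rch.ivt {S : Set (V d)} {a b x : V d} (h : Rch S a b) {r : ℕ} (ha : dinf a x ≤ r)
    (hb : r ≤ dinf b x) : ∃ c ∈ S, dinf c x = r := by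
  obtain ⟨h1, h2⟩ := h
  by_cases hr : dinf a x = r
  · exact ⟨a, h1, hr⟩
  have hlt : dinf a x < r := by omega
  by_contra hc
  push Not at hc
  have : dinf b x < r := by
    clear hb
    induction h2 with
    | refl => exact hlt
    | @tail u v _ h ih =>
      have h3 := dinf_tri v u x
      have h4 := adj_dinf (adj_comm h.1)
      have h5 := hc v h.2.2
      omega
  omega

lemma isConn_of_center {S : Set (V d)} {c : V d} (h : ∀ x ∈ S, Rch S c x) : IsConnSet S :=
  fun x hx y hy => connIn_iff.2 ((h x hx).symm.trans (h y hy))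

lemma IsConnSet.rch {S : Set (V d)} (h : IsConnSet S) {x y : V d} (hx : x ∈ S) (hy : y ∈ S) :
    Rch S x y := connIn_iff.1 (h x hx y hy)

lemma IsConnSet.union {S T : Set (V d)} (hS : IsConnSet S) (hT : IsConnSet T)
    (h : (S ∩ T).Nonempty) : IsConnSet (S ∪ T) := by
  obtain ⟨c, hc1, hc2⟩ := h
  refine isConn_of_center (c := c) ?_
  rintro x (hx | hx)
  · exact (hS.rch hc1 hx).mono subset_union_left
  · exact (hT.rch hc2 hx).mono subset_union_right

lemma isConn_boxI (x : V d) (r : ℕ) : IsConnSet (boxI x r) := by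
  refine isConn_of_center (c := x) fun y hy => Rch.symm ?_
  -- induct on l1 distance
  have key : ∀ n : ℕ, ∀ y : V d, y ∈ boxI x r → (∑ i, (y i - x i).natAbs) = n →
      Rch (boxI x r) y x := by
    intro n
    induction n with
    | zero =>
      intro y hy h
      have : y = x := by
        funext i
        have := (Finset.sum_eq_zero_iff.1 h) i (Finset.mem_univ i)
        omega
      subst this; exact .refl hy
    | succ n ih =>
      intro y hy h
      have : ∃ i, y i ≠ x i := by
        by_contra hc; push Not at hc
        simp [hc] at h
      obtain ⟨i, hi⟩ := this
      set z : V d := Function.update y i (if y i < x i then y i + 1 else y i - 1) with hz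
      have hzi : (z i - x i).natAbs + 1 = (y i - x i).natAbs := by
        simp only [hz, Function.update_self]; split_ifs <;> omega
      have hzj : ∀ j, j ≠ i → z j = y j := fun j hj => by simp [hz, hj]
      have hzb : z ∈ boxI x r := by
        intro j
        have := hy j
        by_cases hj : j = i
        · subst hj; omega
        · rw [hzj j hj]; exact this
      have hsum : ∑ j, (z j - x j).natAbs = n := by
        have h1 := Finset.add_sum_erase Finset.univ (fun j => (z j - x j).natAbs) (Finset.mem_univ i)
        have h2 := Finset.add_sum_erase Finset.univ (fun j => (y j - x j).natAbs) (Finset.mem_univ i)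
        have h3 : ∑ j ∈ Finset.univ.erase i, (z j - x j).natAbs
            = ∑ j ∈ Finset.univ.erase i, (y j - x j).natAbs :=
          Finset.sum_congr rfl fun j hj => by rw [hzj j (Finset.ne_of_mem_erase hj)]
        omega
      have hadj : adj y z := by
        unfold adj
        rw [Finset.sum_eq_single i]
        · simp only [hz, Function.update_self]; split_ifs <;> omega
        · intro j _ hj; rw [hzj j hj]; simp
        · simp
      exact (Rch.single hy hzb hadj).trans (ih z hzb hsum)
  exact key _ y hy rfl

end basics

section lattice
variable {d : ℕ}

lemma extract {α : Type*} {r : α → α → Prop} {N₁ N₂ : α → Prop} {u v : α}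
    (h : Relation.ReflTransGen r u v) (h1 : N₁ u) (h2 : N₂ v) :
    (∃ a, N₁ a ∧ N₂ a ∧ (a = u ∨ ∃ c, r c a)) ∨ (∃ a b, N₁ a ∧ N₂ b ∧ r a b) ∨
    ∃ a w w' b, N₁ a ∧ r a w ∧ ¬ N₁ w ∧ ¬ N₂ w ∧
      Relation.ReflTransGen (fun x y => r x y ∧ (¬ N₁ x ∧ ¬ N₂ x) ∧ (¬ N₁ y ∧ ¬ N₂ y)) w w' ∧
      r w' b ∧ N₂ b := by
  have key : ((∃ a b, N₁ a ∧ N₂ b ∧ r a b) ∨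
    ∃ a w w' b, N₁ a ∧ r a w ∧ ¬ N₁ w ∧ ¬ N₂ w ∧
      Relation.ReflTransGen (fun x y => r x y ∧ (¬ N₁ x ∧ ¬ N₂ x) ∧ (¬ N₁ y ∧ ¬ N₂ y)) w w' ∧
      r w' b ∧ N₂ b) ∨ (¬ N₁ u ∧ ¬ N₂ u ∧ ∃ w' b,
      Relation.ReflTransGen (fun x y => r x y ∧ (¬ N₁ x ∧ ¬ N₂ x) ∧ (¬ N₁ y ∧ ¬ N₂ y)) u w' ∧
      r w' b ∧ N₂ b) ∨ N₂ u := by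
    clear h1
    induction h using Relation.ReflTransGen.head_induction_on with
    | refl => exact .inr (.inr h2)
    | @head u u' hr _ ih =>
      by_cases hN2 : N₂ u
      · exact .inr (.inr hN2)
      by_cases hN1 : N₁ u
      · rcases ih with ih | ⟨hn1, hn2, w', b, hw, hb, hNb⟩ | ih
        · exact .inl ih
        · exact .inl (.inr ⟨u, u', w', b, hN1, hr, hn1, hn2, hw, hb, hNb⟩)
        · exact .inl (.inl ⟨u, u', hN1, ih, hr⟩)
      · rcases ih with ih | ⟨hn1, hn2, w', b, hw, hb, hNb⟩ | ih
        · exact .inl ih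
        · exact .inr (.inl ⟨hN1, hN2, w', b, .head ⟨hr, ⟨hN1, hN2⟩, ⟨hn1, hn2⟩⟩ hw, hb, hNb⟩)
        · exact .inr (.inl ⟨hN1, hN2, u, u', .refl, hr, ih⟩)
  rcases key with key | ⟨h, _⟩ | h
  · exact .inr key
  · exact absurd h1 h
  · exact .inl ⟨u, h1, h, .inl rfl⟩

lemma extract1 {α : Type*} {r : α → α → Prop} {N : α → Prop} {u v : α}
    (h : Relation.ReflTransGen r u v) (h1 : ¬ N u) (h2 : N v) :
    ∃ w' b, Relation.ReflTransGen (fun x y => r x y ∧ ¬ N x ∧ ¬ N y) u w' ∧ r w' b ∧ N b := by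
  induction h using Relation.ReflTransGen.head_induction_on with
  | refl => exact absurd h2 h1
  | @head u u' hr _ ih =>
    by_cases hN : N u'
    · exact ⟨u, u', .refl, hr, hN⟩
    · obtain ⟨w', b, hw, hb⟩ := ih hN
      exact ⟨w', b, .head ⟨hr, h1, hN⟩ hw, hb⟩

/-- lattice with mesh `2L+1` -/
def lat (d L : ℕ) : Set (V d) := {x | ∀ i, ((2 * L + 1 : ℕ) : ℤ) ∣ x i}

def ladj (L : ℕ) (z z' : V d) : Prop :=
  ∃ j, z' = Function.update z j (z j + ((2 * L + 1 : ℕ) : ℤ)) ∨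
    z = Function.update z' j (z' j + ((2 * L + 1 : ℕ) : ℤ))

lemma ladj_symm {L : ℕ} {z z' : V d} (h : ladj L z z') : ladj L z' z := by
  obtain ⟨j, h | h⟩ := h
  exacts [⟨j, .inr h⟩, ⟨j, .inl h⟩]

lemma dinf_update (L : ℕ) (z : V d) (j : Fin d) :
    dinf (Function.update z j (z j + ((2 * L + 1 : ℕ) : ℤ))) z ≤ 2 * L + 1 := by
  refine dinf_le_iff.2 fun i => ?_
  by_cases h : i = j
  · subst h; simp; omega
  · simp [h]

lemma ladj_dinf {L : ℕ} {z z' : V d} (h : ladj L z z') : dinf z z' ≤ 2 * L + 1 := by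
  obtain ⟨j, h | h⟩ := h
  · rw [h, dinf_comm]; exact dinf_update L z j
  · rw [h]; exact dinf_update L z' j

lemma isConn_two_aux (L : ℕ) (z : V d) (j : Fin d) :
    IsConnSet (boxI z L ∪ boxI (Function.update z j (z j + ((2 * L + 1 : ℕ) : ℤ))) L) := by
  set z' := Function.update z j (z j + ((2 * L + 1 : ℕ) : ℤ)) with hz'
  set p : V d := Function.update z j (z j + (L : ℤ)) with hp
  set q : V d := Function.update z j (z j + (L : ℤ) + 1) with hq
  have hp1 : p ∈ boxI z L := by
    intro i
    by_cases h : i = j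
    · subst h; simp [hp]
    · simp [hp, h]
  have hq1 : q ∈ boxI z' L := by
    intro i
    by_cases h : i = j
    · subst h; simp [hq, hz']; omega
    · simp [hq, hz', h]
  have hpq : adj p q := by
    unfold adj
    rw [Finset.sum_eq_single j]
    · simp [hp, hq]
    · intro i _ hi; simp [hp, hq, hi]
    · simp
  refine isConn_of_center (c := p) ?_
  rintro x (hx | hx)
  · exact ((isConn_boxI z L).rch hp1 hx).mono subset_union_left
  · exact (Rch.single (.inl hp1) (.inr hq1) hpq).trans
      (((isConn_boxI z' L).rch hq1 hx).mono subset_union_right)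

lemma isConn_two {L : ℕ} {z z' : V d} (h : ladj L z z') :
    IsConnSet (boxI z L ∪ boxI z' L) := by
  obtain ⟨j, h | h⟩ := h
  · rw [h]; exact isConn_two_aux L z j
  · rw [h, union_comm]; exact isConn_two_aux L z' j

lemma self_mem_boxI (z : V d) (L : ℕ) : z ∈ boxI z L := mem_boxI.2 (by rw [dinf_self]; omega)

lemma exists_box (L : ℕ) (p : V d) : ∃ z ∈ lat d L, p ∈ boxI z L := by
  refine ⟨fun i => ((2 * L + 1 : ℕ) : ℤ) * ((p i + L) / ((2 * L + 1 : ℕ) : ℤ)),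
    fun i => Dvd.intro _ rfl, fun i => ?_⟩
  have h1 := Int.emod_add_mul_ediv (p i + L) ((2 * L + 1 : ℕ) : ℤ)
  have h2 := Int.emod_nonneg (p i + L) (b := ((2 * L + 1 : ℕ) : ℤ)) (by omega)
  have h3 := Int.emod_lt_of_pos (p i + L) (b := ((2 * L + 1 : ℕ) : ℤ)) (by omega)
  show (p i - ((2 * L + 1 : ℕ) : ℤ) * ((p i + L) / ((2 * L + 1 : ℕ) : ℤ))).natAbs ≤ L
  generalize ((2 * L + 1 : ℕ) : ℤ) * ((p i + L) / ((2 * L + 1 : ℕ) : ℤ)) = t at *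
  omega

/-- union of boxes of radius `L` with centers in `P` -/
def UB (L : ℕ) (P : Set (V d)) : Set (V d) := ⋃ z ∈ P, boxI z L

lemma mem_UB {L : ℕ} {P : Set (V d)} {x : V d} : x ∈ UB L P ↔ ∃ z ∈ P, x ∈ boxI z L := by
  simp [UB]

/-- lattice points reachable from `w` within `Y` -/
def rset (L : ℕ) (Y : Set (V d)) (w : V d) : Set (V d) :=
  {z | Relation.ReflTransGen (fun u v => ladj L u v ∧ u ∈ Y ∧ v ∈ Y) w z}

lemma rset_sub {L : ℕ} {Y : Set (V d)} {w : V d} (hw : w ∈ Y) : rset L Y w ⊆ Y := by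
  intro z hz
  induction hz with
  | refl => exact hw
  | tail _ h _ => exact h.2.2

lemma isConn_rset {L : ℕ} {Y : Set (V d)} {w : V d} : IsConnSet (UB L (rset L Y w)) := by
  have key : ∀ z, z ∈ rset L Y w → ∀ x ∈ boxI z L, Rch (UB L (rset L Y w)) w x := by
    intro z hz
    induction hz with
    | refl =>
      intro x hx
      refine ((isConn_boxI w L).rch (self_mem_boxI w L) hx).mono fun y hy => ?_
      exact mem_UB.2 ⟨w, .refl, hy⟩
    | @tail u v h1 h2 ih =>
      intro x hx
      refine (ih u (self_mem_boxI u L)).trans ?_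
      refine ((isConn_two h2.1).rch (.inl (self_mem_boxI u L)) (.inr hx)).mono ?_
      rintro y (hy | hy)
      · exact mem_UB.2 ⟨u, h1, hy⟩
      · exact mem_UB.2 ⟨v, .tail h1 h2, hy⟩
  refine isConn_of_center (c := w) fun x hx => ?_
  obtain ⟨z, hz, hx⟩ := mem_UB.1 hx
  exact key z hz x hx

/-- lattice points of an annulus -/
def Xann (L : ℕ) (x : V d) (a b : ℕ) : Set (V d) :=
  {z | z ∈ lat d L ∧ a ≤ dinf z x ∧ dinf z x ≤ b}

lemma ann_corner (hd : 2 ≤ d) {L a b : ℕ} (ha : 0 < a) (hab : a + 2 * L + 1 ≤ b) (x : V d) :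
    ∃ p, ∀ z ∈ Xann L x a b,
      Relation.ReflTransGen
        (fun u v => ladj L u v ∧ u ∈ Xann L x a b ∧ v ∈ Xann L x a b) z p := by
  set s : ℤ := ((2 * L + 1 : ℕ) : ℤ) with hs
  have hs0 : 0 < s := by omega
  set p : V d := fun j => s * ((x j + b) / s) with hp
  have hp1 : ∀ j, p j ≤ x j + b := fun j => by
    have := Int.mul_ediv_self_le (x := x j + b) (k := s) (by omega); exact this
  have hp2 : ∀ j, x j + b < p j + s := fun j => by
    have := Int.lt_mul_ediv_self_add (x := x j + b) (k := s) hs0; exact this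
  have hzp : ∀ z : V d, z ∈ lat d L → ∀ j, z j ≤ x j + b → z j ≤ p j := by
    intro z hz j hj
    obtain ⟨t, ht⟩ := hz j
    rw [ht, ← hs] at hj ⊢
    have : t ≤ (x j + b) / s := (Int.le_ediv_iff_mul_le hs0).2 (by rw [mul_comm]; exact hj)
    exact mul_le_mul_of_nonneg_left this hs0.le
  have hzp2 : ∀ z : V d, z ∈ lat d L → ∀ j, z j < p j → z j + s ≤ p j := by
    intro z hz j hj
    obtain ⟨t, ht⟩ := hz j
    rw [ht, ← hs] at hj ⊢
    have h1 : t < (x j + b) / s := lt_of_mul_lt_mul_left hj hs0.le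
    calc s * t + s = s * (t + 1) := by ring
      _ ≤ s * ((x j + b) / s) := mul_le_mul_of_nonneg_left (by omega) hs0.le
  refine ⟨p, ?_⟩
  have key : ∀ n : ℕ, ∀ z ∈ Xann L x a b, ∑ j, (p j - z j).natAbs ≤ n →
      Relation.ReflTransGen
        (fun u v => ladj L u v ∧ u ∈ Xann L x a b ∧ v ∈ Xann L x a b) z p := by
    intro n
    induction n with
    | zero =>
      intro z hz h
      have : z = p := by
        funext j
        have := Finset.sum_eq_zero_iff.1 (Nat.le_zero.1 h) j (Finset.mem_univ j)
        omega
      rw [this]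
    | succ n ih =>
      intro z hz h
      have hzle : ∀ j, z j ≤ p j := fun j => hzp z hz.1 j (by
        have := dinf_le_iff.1 hz.2.2 j; omega)
      by_cases hc : ∃ i j, a ≤ (z i - x i).natAbs ∧ j ≠ i ∧ z j < p j
      · obtain ⟨i, j, hi, hj, hzj⟩ := hc
        set z' := Function.update z j (z j + s) with hz'
        have hj' : z' j = z j + s := by simp [hz']
        have hk' : ∀ k, k ≠ j → z' k = z k := fun k hk => by simp [hz', hk]
        have hzs := hzp2 z hz.1 j hzj
        have hmem : z' ∈ Xann L x a b := by
          refine ⟨fun k => ?_, ?_, dinf_le_iff.2 fun k => ?_⟩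
          · by_cases hk : k = j
            · subst hk; rw [hj']; exact dvd_add (hz.1 k) dvd_rfl
            · rw [hk' k hk]; exact hz.1 k
          · refine le_trans hi ?_
            rw [← hk' i hj.symm]; exact le_dinf z' x i
          · have h1 := dinf_le_iff.1 hz.2.2 k
            by_cases hk : k = j
            · subst hk; rw [hj']
              have := hp1 k; omega
            · rw [hk' k hk]; exact h1
        refine .head ⟨⟨j, .inl hz'⟩, hz, hmem⟩ (ih z' hmem ?_)
        have h1 := Finset.add_sum_erase Finset.univ (fun j => (p j - z j).natAbs) (Finset.mem_univ j)
        have h2 := Finset.add_sum_erase Finset.univ (fun j => (p j - z' j).natAbs)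
          (Finset.mem_univ j)
        have h3 : ∑ k ∈ Finset.univ.erase j, (p k - z' k).natAbs
            = ∑ k ∈ Finset.univ.erase j, (p k - z k).natAbs :=
          Finset.sum_congr rfl fun k hk => by rw [hk' k (Finset.ne_of_mem_erase hk)]
        have h4 : (p j - z' j).natAbs < (p j - z j).natAbs := by rw [hj']; omega
        omega
      · push Not at hc
        obtain ⟨i, hi⟩ := exists_le_of_le_dinf ha hz.2.1
        have h1 : ∀ j, j ≠ i → z j = p j := fun j hj => le_antisymm (hzle j) (hc i j hi hj)
        obtain ⟨j, hj⟩ : ∃ j : Fin d, j ≠ i := by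
          have : Nontrivial (Fin d) := Fin.nontrivial_iff_two_le.2 hd
          exact exists_ne i
        have h2 : a ≤ (z j - x j).natAbs := by
          rw [h1 j hj]; have := hp2 j; omega
        have h3 : z i = p i := le_antisymm (hzle i) (hc j i h2 hj.symm)
        have : z = p := by
          funext k
          by_cases hk : k = i
          · rw [hk, h3]
          · exact h1 k hk
        rw [this]
  intro z hz
  exact key _ z hz le_rfl

lemma ann_conn (hd : 2 ≤ d) {L a b : ℕ} (ha : 0 < a) (hab : a + 2 * L + 1 ≤ b) (x : V d)
    {z z' : V d} (hz : z ∈ Xann L x a b) (hz' : z' ∈ Xann L x a b) :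
    Relation.ReflTransGen
        (fun u v => ladj L u v ∧ u ∈ Xann L x a b ∧ v ∈ Xann L x a b) z z' := by
  obtain ⟨p, hp⟩ := ann_corner hd ha hab x
  refine (hp z hz).trans ?_
  have := hp z' hz'
  revert this
  generalize p = q
  intro h
  induction h with
  | refl => exact .refl
  | tail _ h ih => exact .head ⟨ladj_symm h.1, h.2.2, h.2.1⟩ ih

lemma Xann_finite (L R : ℕ) (x : V d) :
    {z | z ∈ lat d L ∧ dinf z x ≤ R * L}.Finite ∧
      {z | z ∈ lat d L ∧ dinf z x ≤ R * L}.ncard ≤ (R + 2) ^ d := by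
  classical
  set s : ℤ := ((2 * L + 1 : ℕ) : ℤ) with hs
  have hs0 : 0 < s := by omega
  set I : Fin d → Finset ℤ := fun j => Finset.Icc ((x j - (R * L : ℕ)) / s) ((x j + (R * L : ℕ)) / s)
  have hI : ∀ j, (I j).card ≤ R + 2 := by
    intro j
    simp only [I, Int.card_Icc]
    have h1 := Int.mul_ediv_self_le (x := x j + (R * L : ℕ)) (k := s) (by omega)
    have h2 := Int.lt_mul_ediv_self_add (x := x j - (R * L : ℕ)) (k := s) hs0
    generalize (x j + (R * L : ℕ)) / s = A at *
    generalize (x j - (R * L : ℕ)) / s = B at *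
    have h3 : s * (A - B) < s * (R + 1) := by
      have : s * (A - B) = s * A - s * B := by ring
      have h4 : s * ((R : ℤ) + 1) = R * L * 2 + R + s := by rw [hs]; push_cast; ring
      push_cast at h1 h2
      have : (0:ℤ) ≤ R := by omega
      linarith
    have := lt_of_mul_lt_mul_left h3 hs0.le
    omega
  have hsub : {z | z ∈ lat d L ∧ dinf z x ≤ R * L} ⊆
      ((Fintype.piFinset I).image (fun u j => s * u j) : Finset (V d)) := by
    rintro z ⟨hz, hzx⟩
    choose t ht using hz
    simp only [Finset.coe_image, Set.mem_image, Finset.mem_coe, Fintype.mem_piFinset]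
    refine ⟨t, fun j => ?_, by funext j; rw [ht j]⟩
    have := dinf_le_iff.1 hzx j
    simp only [I, Finset.mem_Icc]
    rw [ht j, ← hs] at this
    constructor
    · have h5 : x j - (R * L : ℕ) ≤ s * t j := by omega
      have := Int.ediv_le_ediv hs0 h5
      rwa [Int.mul_ediv_cancel_left _ hs0.ne'] at this
    · have h5 : s * t j ≤ x j + (R * L : ℕ) := by omega
      have := Int.ediv_le_ediv hs0 h5
      rwa [Int.mul_ediv_cancel_left _ hs0.ne'] at this
  refine ⟨(Finset.finite_toSet _).subset hsub, ?_⟩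
  refine (Set.ncard_le_ncard hsub (Finset.finite_toSet _)).trans ?_
  rw [Set.ncard_coe_finset]
  refine Finset.card_image_le.trans ?_
  rw [Fintype.card_piFinset]
  calc ∏ i, (I i).card ≤ ∏ _i : Fin d, (R + 2) := Finset.prod_le_prod' fun i _ => hI i
    _ = (R + 2) ^ d := by simp

end lattice

section scales
variable {d : ℕ} {Ω : Type*}

def kk (ℓ₀ L₀ κ n : ℕ) : ℕ := κ * Lsc ℓ₀ L₀ n

lemma Lsc_pos {ℓ₀ L₀ : ℕ} (h1 : 1000 ≤ ℓ₀) (h2 : 1 ≤ L₀) (n : ℕ) : 1 ≤ Lsc ℓ₀ L₀ n := by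
  unfold Lsc
  exact Nat.mul_pos (Nat.pow_pos (by omega)) h2

lemma kk_ge {ℓ₀ L₀ κ : ℕ} (h : 20 ≤ κ) (n : ℕ) : 20 * Lsc ℓ₀ L₀ n ≤ kk ℓ₀ L₀ κ n :=
  Nat.mul_le_mul_right _ h

lemma kk_succ_eq {ℓ₀ L₀ κ : ℕ} (n : ℕ) : kk ℓ₀ L₀ κ (n + 1) = ℓ₀ * kk ℓ₀ L₀ κ n := by
  unfold kk Lsc; ring

lemma kk_succ {ℓ₀ L₀ κ : ℕ} (h : 1000 ≤ ℓ₀) (n : ℕ) :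
    1000 * kk ℓ₀ L₀ κ n ≤ kk ℓ₀ L₀ κ (n + 1) := by
  rw [kk_succ_eq]; exact Nat.mul_le_mul_right _ h

lemma kk_mono {ℓ₀ L₀ κ : ℕ} (h : 1000 ≤ ℓ₀) {m n : ℕ} (hmn : m ≤ n) :
    kk ℓ₀ L₀ κ m ≤ kk ℓ₀ L₀ κ n := by
  induction hmn with
  | refl => exact le_rfl
  | @step m' _ ih => exact ih.trans (by have := kk_succ (L₀ := L₀) (κ := κ) h m'; rw [Nat.succ_eq_add_one]; omega)

lemma mem_SgAt {ℓ₀ L₀ κ n : ℕ} {x p : V d} : p ∈ SgAt d ℓ₀ L₀ κ n x ↔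
    dinf p x ≤ 9 * kk ℓ₀ L₀ κ n ∧ 17 * kk ℓ₀ L₀ κ n / 2 < dinf p x := by
  unfold SgAt kk
  rw [Set.mem_sdiff, mem_boxI, mem_boxI, mul_assoc, mul_assoc, not_le]

/-- the recursive bad event -/
def Bad (ℓ₀ L₀ κ : ℕ) (F : V d → Set Ω) (H : ℕ → V d → Set Ω) (ω : Ω) : ℕ → V d → Prop
  | 0, x => ∃ z ∈ latt d ℓ₀ L₀ 0, dinf z x ≤ 10 * kk ℓ₀ L₀ κ 0 ∧ ω ∉ F z
  | n + 1, x => (∃ z ∈ latt d ℓ₀ L₀ (n + 1), dinf z x ≤ 10 * kk ℓ₀ L₀ κ (n + 1) ∧ ω ∉ H (n + 1) z) ∨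
      ∃ z₁ ∈ latt d ℓ₀ L₀ n, ∃ z₂ ∈ latt d ℓ₀ L₀ n,
        (171 * kk ℓ₀ L₀ κ (n + 1) ≤ 20 * dinf z₁ x ∧ 20 * dinf z₁ x ≤ 174 * kk ℓ₀ L₀ κ (n + 1)) ∧
        (176 * kk ℓ₀ L₀ κ (n + 1) ≤ 20 * dinf z₂ x ∧ 20 * dinf z₂ x ≤ 179 * kk ℓ₀ L₀ κ (n + 1)) ∧
        Bad ℓ₀ L₀ κ F H ω n z₁ ∧ Bad ℓ₀ L₀ κ F H ω n z₂

def Adm (ℓ₀ L₀ κ n : ℕ) (x : V d) (S : Set (V d)) : Prop :=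
  (∀ s ∈ S, ∃ t, Rch S s t ∧ 10 * kk ℓ₀ L₀ κ n ≤ dinf t x) ∧ ∃ s ∈ S, dinf s x ≤ 8 * kk ℓ₀ L₀ κ n

lemma Adm.of {ℓ₀ L₀ κ n : ℕ} {x : V d} {S : Set (V d)} (h : AdmissibleAt d ℓ₀ L₀ κ n x S) :
    Adm ℓ₀ L₀ κ n x S := by
  obtain ⟨h1, s, hs, t, hst, ht⟩ := h
  refine ⟨fun s hs => ?_, t, (connIn_iff.1 hst).right, ?_⟩
  · obtain ⟨t, hst, ht1, z, hz, hadj⟩ := h1 s hs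
    refine ⟨t, connIn_iff.1 hst, ?_⟩
    rw [mem_boxI, not_le] at hz
    have h2 := dinf_tri z t x
    have h3 := adj_dinf (adj_comm hadj)
    unfold kk; rw [← mul_assoc]; omega
  · rw [mem_boxI, mul_assoc] at ht; exact ht

def GoodBox (ℓ₀ L₀ : ℕ) (F : V d → Set Ω) (H : ℕ → V d → Set Ω) (ω : Ω) (n : ℕ)
    (b : ℕ × V d) : Prop :=
  (b.1 = 0 → ω ∈ F b.2) ∧
    ∀ j : ℕ, max b.1 1 ≤ j → j ≤ n →
      ∀ y ∈ latt d ℓ₀ L₀ j, b.2 ∈ boxI y (Lsc ℓ₀ L₀ j) → ω ∈ H j y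

def UF (ℓ₀ L₀ : ℕ) (ℬ : Finset (ℕ × V d)) : Set (V d) := ⋃ b ∈ ℬ, boxI b.2 (Lsc ℓ₀ L₀ b.1)

lemma mem_UF {ℓ₀ L₀ : ℕ} {ℬ : Finset (ℕ × V d)} {x : V d} :
    x ∈ UF ℓ₀ L₀ ℬ ↔ ∃ b ∈ ℬ, x ∈ boxI b.2 (Lsc ℓ₀ L₀ b.1) := by simp [UF]

open Classical in
lemma UF_union {ℓ₀ L₀ : ℕ} (ℬ ℬ' : Finset (ℕ × V d)) :
    UF ℓ₀ L₀ (ℬ ∪ ℬ') = UF ℓ₀ L₀ ℬ ∪ UF ℓ₀ L₀ ℬ' := by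
  ext x
  simp only [mem_UF, mem_union, Finset.mem_union, or_and_right, exists_or]

open Classical in
lemma UF_image {ℓ₀ L₀ : ℕ} (n : ℕ) (P : Finset (V d)) :
    UF ℓ₀ L₀ (P.image fun z => (n, z)) = UB (Lsc ℓ₀ L₀ n) (P : Set (V d)) := by
  ext x
  simp only [mem_UF, mem_UB, Finset.mem_image]
  constructor
  · rintro ⟨b, ⟨z, hz, rfl⟩, hx⟩; exact ⟨z, hz, hx⟩
  · rintro ⟨z, hz, hx⟩; exact ⟨_, ⟨z, hz, rfl⟩, hx⟩

lemma GoodBox.lift {ℓ₀ L₀ κ : ℕ} (hκ : 20 ≤ κ) {F : V d → Set Ω} {H : ℕ → V d → Set Ω} {ω : Ω}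
    {n : ℕ} {b : ℕ × V d} (h : GoodBox ℓ₀ L₀ F H ω n b) {x : V d}
    (hx : ¬ Bad ℓ₀ L₀ κ F H ω (n + 1) x) (hb : b.2 ∈ SgAt d ℓ₀ L₀ κ (n + 1) x) :
    GoodBox ℓ₀ L₀ F H ω (n + 1) b := by
  refine ⟨h.1, fun j hj hjn y hy hby => ?_⟩
  by_cases hjn' : j ≤ n
  · exact h.2 j hj hjn' y hy hby
  · have : j = n + 1 := by omega
    subst this
    by_contra hc
    refine hx (.inl ⟨y, hy, ?_, hc⟩)
    have h1 := (mem_SgAt.1 hb).1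
    have h2 := mem_boxI.1 hby
    have h3 := dinf_tri y b.2 x
    have h4 := dinf_comm y b.2
    have h5 := kk_ge (ℓ₀ := ℓ₀) (L₀ := L₀) hκ (n + 1)
    omega

lemma GoodBox.self {ℓ₀ L₀ κ : ℕ} (hκ : 20 ≤ κ) {F : V d → Set Ω} {H : ℕ → V d → Set Ω} {ω : Ω}
    {n : ℕ} {z : V d} (hz : z ∈ latt d ℓ₀ L₀ n) (h : ¬ Bad ℓ₀ L₀ κ F H ω n z) :
    GoodBox ℓ₀ L₀ F H ω n (n, z) := by
  constructor
  · rintro h0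
    simp only at h0
    subst h0
    by_contra hc
    exact h ⟨z, hz, by rw [dinf_self]; omega, hc⟩
  · intro j hj hjn y hy hby
    simp only at hj hby
    have : j = n := by omega
    subst this
    obtain ⟨m, rfl⟩ : ∃ m, j = m + 1 := ⟨j - 1, by omega⟩
    by_contra hc
    refine h (.inl ⟨y, hy, ?_, hc⟩)
    have h2 := mem_boxI.1 hby
    have h4 := dinf_comm y z
    have h5 := kk_ge (ℓ₀ := ℓ₀) (L₀ := L₀) hκ (m + 1)
    omega

lemma cross {ℓ₀ L₀ κ n : ℕ} {x : V d} {S : Set (V d)} (h : Adm ℓ₀ L₀ κ n x S) (L : ℕ) {r : ℕ}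
    (h1 : 8 * kk ℓ₀ L₀ κ n ≤ r) (h2 : r ≤ 10 * kk ℓ₀ L₀ κ n) :
    ∃ z ∈ lat d L, (boxI z L ∩ S).Nonempty ∧ r ≤ dinf z x + L ∧ dinf z x ≤ r + L := by
  obtain ⟨h3, s, hs, hsx⟩ := h
  obtain ⟨t, hst, htx⟩ := h3 s hs
  obtain ⟨c, hc, hcx⟩ := hst.ivt (x := x) (r := r) (by omega) (by omega)
  obtain ⟨z, hz, hcz⟩ := exists_box L c
  refine ⟨z, hz, ⟨c, hcz, hc⟩, ?_⟩
  have h4 := mem_boxI.1 hcz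
  have h5 := dinf_tri c z x
  have h6 := dinf_tri z c x
  have h7 := dinf_comm c z
  omega

lemma midpoint (L : ℕ) {k : ℕ} {p s : V d} (h : dinf p s ≤ 12 * k) :
    ∃ y ∈ lat d L, dinf y p ≤ 6 * k + L + 1 ∧ dinf y s ≤ 6 * k + L + 1 := by
  obtain ⟨y, hy, hmy⟩ := exists_box L (fun i => (p i + s i) / 2 : V d)
  refine ⟨y, hy, dinf_le_iff.2 fun i => ?_, dinf_le_iff.2 fun i => ?_⟩
  all_goals
    have h1 := hmy i
    have h2 := dinf_le_iff.1 h i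
    simp only at h1
    omega

structure HalfB (ℓ₀ L₀ κ N : ℕ) (F : V d → Set Ω) (H : ℕ → V d → Set Ω) (ω : Ω) (n : ℕ) (x : V d)
    (S T : Set (V d)) (ℬ : Finset (ℕ × V d)) : Prop where
  lvl : ∀ b ∈ ℬ, b.1 < n ∨ b.1 = 0
  lt : ∀ b ∈ ℬ, b.2 ∈ latt d ℓ₀ L₀ b.1
  sub : ∀ b ∈ ℬ, boxI b.2 (Lsc ℓ₀ L₀ b.1) ⊆ SgAt d ℓ₀ L₀ κ n x
  conn : IsConnSet (UF ℓ₀ L₀ ℬ)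
  meetS : ∃ b₁ ∈ ℬ, b₁.1 = 0 ∧ (boxI b₁.2 (Lsc ℓ₀ L₀ 0) ∩ S).Nonempty ∧
    ∀ b ∈ ℬ, b ≠ b₁ → boxI b.2 (Lsc ℓ₀ L₀ b.1) ∩ S = ∅
  meetT : (UF ℓ₀ L₀ ℬ ∩ T).Nonempty
  far : ∀ b ∈ ℬ, 1 ≤ b.1 → setDistGE (boxI b.2 (Lsc ℓ₀ L₀ b.1)) S (κ * Lsc ℓ₀ L₀ b.1)
  count : ∀ m : ℕ, (ℬ.filter fun b => b.1 = m).card ≤ if n = 0 then N else 2 * N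
  good : ∀ b ∈ ℬ, GoodBox ℓ₀ L₀ F H ω n b

/-- the clean sub-annulus at scale `n+1` -/
structure Clean (ℓ₀ L₀ κ : ℕ) (F : V d → Set Ω) (H : ℕ → V d → Set Ω) (ω : Ω) (n : ℕ) (x : V d)
    (lo : ℕ) : Prop where
  h1 : 172 ≤ lo
  h2 : lo ≤ 177
  cl : ∀ y ∈ latt d ℓ₀ L₀ n, (lo - 1) * kk ℓ₀ L₀ κ (n + 1) ≤ 20 * dinf y x →
    20 * dinf y x ≤ (lo + 2) * kk ℓ₀ L₀ κ (n + 1) → ¬ Bad ℓ₀ L₀ κ F H ω n y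

lemma exists_clean {ℓ₀ L₀ κ : ℕ} {F : V d → Set Ω} {H : ℕ → V d → Set Ω} {ω : Ω} {n : ℕ} {x : V d}
    (h : ¬ Bad ℓ₀ L₀ κ F H ω (n + 1) x) : ∃ lo, Clean ℓ₀ L₀ κ F H ω n x lo := by
  by_contra hc
  push Not at hc
  have h1 : ¬ Clean ℓ₀ L₀ κ F H ω n x 172 := hc 172
  have h2 : ¬ Clean ℓ₀ L₀ κ F H ω n x 177 := hc 177
  refine h (.inr ?_)
  by_contra hc2
  by_cases h3 : ∃ y ∈ latt d ℓ₀ L₀ n, 171 * kk ℓ₀ L₀ κ (n + 1) ≤ 20 * dinf y x ∧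
    20 * dinf y x ≤ 174 * kk ℓ₀ L₀ κ (n + 1) ∧ Bad ℓ₀ L₀ κ F H ω n y
  · obtain ⟨z₁, hz₁, ha, hb, hB⟩ := h3
    refine h2 ⟨by omega, by omega, fun y hy hy1 hy2 hyB => hc2 ?_⟩
    exact ⟨z₁, hz₁, y, hy, ⟨ha, hb⟩, ⟨hy1, hy2⟩, hB, hyB⟩
  · exact h1 ⟨by omega, by omega, fun y hy hy1 hy2 hyB => h3 ⟨y, hy, hy1, hy2, hyB⟩⟩

/-- being in the clean range with some room -/
def InR (ℓ₀ L₀ κ n : ℕ) (x : V d) (lo : ℕ) (y : V d) : Prop :=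
  (lo - 1) * kk ℓ₀ L₀ κ (n + 1) ≤ 20 * dinf y x ∧ 20 * dinf y x ≤ (lo + 2) * kk ℓ₀ L₀ κ (n + 1)

lemma InR.bds {ℓ₀ L₀ κ n : ℕ} {x : V d} {lo : ℕ} {y : V d} (h : InR ℓ₀ L₀ κ n x lo y)
    (h1 : 172 ≤ lo) (h2 : lo ≤ 177) : 171 * kk ℓ₀ L₀ κ (n + 1) ≤ 20 * dinf y x ∧
      20 * dinf y x ≤ 179 * kk ℓ₀ L₀ κ (n + 1) := by
  have h3 : 171 * kk ℓ₀ L₀ κ (n + 1) ≤ (lo - 1) * kk ℓ₀ L₀ κ (n + 1) :=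
    Nat.mul_le_mul_right _ (by omega)
  have h4 : (lo + 2) * kk ℓ₀ L₀ κ (n + 1) ≤ 179 * kk ℓ₀ L₀ κ (n + 1) :=
    Nat.mul_le_mul_right _ (by omega)
  exact ⟨h3.trans h.1, h.2.trans h4⟩

lemma InR.sg {ℓ₀ L₀ κ n : ℕ} (hℓ : 1000 ≤ ℓ₀) (hL : 1 ≤ L₀) (hκ : 20 ≤ κ)
    {x : V d} {lo : ℕ} {y : V d} (h : InR ℓ₀ L₀ κ n x lo y)
    (h1 : 172 ≤ lo) (h2 : lo ≤ 177) {p : V d} (hp : dinf p y ≤ 9 * kk ℓ₀ L₀ κ n) :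
    p ∈ SgAt d ℓ₀ L₀ κ (n + 1) x := by
  obtain ⟨h3, h4⟩ := h.bds h1 h2
  have h5 := dinf_tri p y x
  have h6 := dinf_tri y p x
  have h7 := dinf_comm p y
  have h8 := kk_succ (L₀ := L₀) (κ := κ) hℓ n
  have h9 := kk_ge (ℓ₀ := ℓ₀) (L₀ := L₀) hκ n
  have h10 := Lsc_pos hℓ hL n
  rw [mem_SgAt]
  constructor <;> omega

lemma InR.adm {ℓ₀ L₀ κ n : ℕ} (hℓ : 1000 ≤ ℓ₀)
    {x : V d} {lo : ℕ} {y : V d} (h : InR ℓ₀ L₀ κ n x lo y)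
    (h1 : 172 ≤ lo) (h2 : lo ≤ 177) {S : Set (V d)} (hS : Adm ℓ₀ L₀ κ (n + 1) x S) {s : V d}
    (hs : s ∈ S) (hsy : dinf s y ≤ 8 * kk ℓ₀ L₀ κ n) : Adm ℓ₀ L₀ κ n y S := by
  obtain ⟨h3, h4⟩ := h.bds h1 h2
  refine ⟨fun s hs => ?_, s, hs, hsy⟩
  obtain ⟨t, hst, ht⟩ := hS.1 s hs
  refine ⟨t, hst, ?_⟩
  have h5 := dinf_tri t y x
  have h8 := kk_succ (L₀ := L₀) (κ := κ) hℓ n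
  omega

/-- the set of lattice points used for paths -/
def XX (ℓ₀ L₀ κ n : ℕ) (x : V d) (lo : ℕ) : Set (V d) :=
  Xann (Lsc ℓ₀ L₀ n) x (lo * kk ℓ₀ L₀ κ (n + 1) / 20 + 1) ((lo + 1) * kk ℓ₀ L₀ κ (n + 1) / 20)

lemma XX.near {ℓ₀ L₀ κ n : ℕ} (hℓ : 1000 ≤ ℓ₀) {x : V d} {lo : ℕ} (h1 : 172 ≤ lo)
    {z y : V d} (hz : z ∈ XX ℓ₀ L₀ κ n x lo) (hy : dinf y z ≤ 20 * kk ℓ₀ L₀ κ n) :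
    InR ℓ₀ L₀ κ n x lo y := by
  obtain ⟨_, h2, h3⟩ := hz
  have h5 := dinf_tri y z x
  have h6 := dinf_tri z y x
  have h7 := dinf_comm z y
  have h8 := kk_succ (L₀ := L₀) (κ := κ) hℓ n
  have e1 : (lo - 1) * kk ℓ₀ L₀ κ (n + 1) + kk ℓ₀ L₀ κ (n + 1) = lo * kk ℓ₀ L₀ κ (n + 1) := by
    obtain ⟨l, rfl⟩ : ∃ l, lo = l + 1 := ⟨lo - 1, by omega⟩
    simp; ring
  have e2 : (lo + 2) * kk ℓ₀ L₀ κ (n + 1) =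
      (lo + 1) * kk ℓ₀ L₀ κ (n + 1) + kk ℓ₀ L₀ κ (n + 1) := by ring
  unfold InR
  generalize (lo - 1) * kk ℓ₀ L₀ κ (n + 1) = A at *
  generalize (lo + 2) * kk ℓ₀ L₀ κ (n + 1) = B at *
  generalize (lo + 1) * kk ℓ₀ L₀ κ (n + 1) = C at *
  generalize lo * kk ℓ₀ L₀ κ (n + 1) = D at *
  constructor <;> omega

lemma XX.conn (hd : 2 ≤ d) {ℓ₀ L₀ κ n : ℕ} (hℓ : 1000 ≤ ℓ₀) (hL : 1 ≤ L₀) (hκ : 20 ≤ κ)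
    {x : V d} {lo : ℕ}
    {z y : V d} (hz : z ∈ XX ℓ₀ L₀ κ n x lo) (hy : y ∈ XX ℓ₀ L₀ κ n x lo) :
    Relation.ReflTransGen (fun u v => ladj (Lsc ℓ₀ L₀ n) u v ∧ u ∈ XX ℓ₀ L₀ κ n x lo ∧
      v ∈ XX ℓ₀ L₀ κ n x lo) z y := by
  refine ann_conn hd (by omega) ?_ x hz hy
  have h8 := kk_succ (L₀ := L₀) (κ := κ) hℓ n
  have h9 := kk_ge (ℓ₀ := ℓ₀) (L₀ := L₀) hκ n
  have h10 := Lsc_pos hℓ hL n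
  have e2 : (lo + 1) * kk ℓ₀ L₀ κ (n + 1) =
      lo * kk ℓ₀ L₀ κ (n + 1) + kk ℓ₀ L₀ κ (n + 1) := by ring
  generalize (lo + 1) * kk ℓ₀ L₀ κ (n + 1) = C at *
  generalize lo * kk ℓ₀ L₀ κ (n + 1) = D at *
  omega

lemma XX.cross {ℓ₀ L₀ κ n : ℕ} (hℓ : 1000 ≤ ℓ₀) (hL : 1 ≤ L₀) (hκ : 20 ≤ κ)
    {x : V d} {lo : ℕ} (h1 : 172 ≤ lo) (h2 : lo ≤ 177) {S : Set (V d)}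
    (hS : Adm ℓ₀ L₀ κ (n + 1) x S) :
    ∃ z ∈ XX ℓ₀ L₀ κ n x lo, (boxI z (Lsc ℓ₀ L₀ n) ∩ S).Nonempty := by
  have h8 := kk_succ (L₀ := L₀) (κ := κ) hℓ n
  have h9 := kk_ge (ℓ₀ := ℓ₀) (L₀ := L₀) hκ n
  have h10 := Lsc_pos hℓ hL n
  have e2 : (lo + 1) * kk ℓ₀ L₀ κ (n + 1) =
      lo * kk ℓ₀ L₀ κ (n + 1) + kk ℓ₀ L₀ κ (n + 1) := by ring
  have h3 : 172 * kk ℓ₀ L₀ κ (n + 1) ≤ lo * kk ℓ₀ L₀ κ (n + 1) :=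
    Nat.mul_le_mul_right _ (by omega)
  have h4 : lo * kk ℓ₀ L₀ κ (n + 1) ≤ 177 * kk ℓ₀ L₀ κ (n + 1) :=
    Nat.mul_le_mul_right _ (by omega)
  obtain ⟨z, hz, hzS, hz1, hz2⟩ := GFFperc.cross hS (Lsc ℓ₀ L₀ n)
    (r := (2 * (lo * kk ℓ₀ L₀ κ (n + 1)) + kk ℓ₀ L₀ κ (n + 1)) / 40)
    (by omega) (by omega)
  refine ⟨z, ⟨hz, ?_, ?_⟩, hzS⟩
  · omega
  · rw [e2]; omega

lemma XX.fin {ℓ₀ L₀ κ n : ℕ} {x : V d} {lo : ℕ} (h2 : lo ≤ 177) :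
    (XX ℓ₀ L₀ κ n x lo).Finite ∧ (XX ℓ₀ L₀ κ n x lo).ncard ≤ (9 * κ * ℓ₀ + 2) ^ d := by
  have h := Xann_finite (Lsc ℓ₀ L₀ n) (9 * κ * ℓ₀) x
  have hs : XX ℓ₀ L₀ κ n x lo ⊆ {z | z ∈ lat d (Lsc ℓ₀ L₀ n) ∧ dinf z x ≤ 9 * κ * ℓ₀ * Lsc ℓ₀ L₀ n} := by
    rintro z ⟨hz, _, hz2⟩
    refine ⟨hz, ?_⟩
    have h4 : (lo + 1) * kk ℓ₀ L₀ κ (n + 1) ≤ 178 * kk ℓ₀ L₀ κ (n + 1) :=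
      Nat.mul_le_mul_right _ (by omega)
    have h5 : 9 * κ * ℓ₀ * Lsc ℓ₀ L₀ n = 9 * kk ℓ₀ L₀ κ (n + 1) := by
      rw [kk_succ_eq]; unfold kk; ring
    rw [h5]
    omega
  exact ⟨h.1.subset hs, (Set.ncard_le_ncard hs h.1).trans h.2⟩

end scales

section halfs
variable {d : ℕ} {Ω : Type*} {ℓ₀ L₀ κ N : ℕ} {F : V d → Set Ω} {H : ℕ → V d → Set Ω} {ω : Ω}

lemma box_inter_empty {A S : Set (V d)} (h : ∀ p ∈ A, p ∉ S) : A ∩ S = ∅ := by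
  ext p; simp only [mem_inter_iff, mem_empty_iff_false, iff_false]; exact fun hp => h p hp.1 hp.2

def X0 (ℓ₀ L₀ κ : ℕ) (x : V d) : Set (V d) :=
  Xann (Lsc ℓ₀ L₀ 0) x (172 * kk ℓ₀ L₀ κ 0 / 20 + 1) (178 * kk ℓ₀ L₀ κ 0 / 20)

lemma X0.sg (hL : 1 ≤ L₀) (hℓ : 1000 ≤ ℓ₀) (hκ : 20 ≤ κ) {x z : V d} (hz : z ∈ X0 ℓ₀ L₀ κ x) :
    boxI z (Lsc ℓ₀ L₀ 0) ⊆ SgAt d ℓ₀ L₀ κ 0 x := by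
  intro p hp
  rw [mem_boxI] at hp
  obtain ⟨_, h1, h2⟩ := hz
  have h5 := dinf_tri p z x
  have h6 := dinf_tri z p x
  have h7 := dinf_comm p z
  have h9 := kk_ge (ℓ₀ := ℓ₀) (L₀ := L₀) hκ 0
  have h10 := Lsc_pos hℓ hL 0
  rw [mem_SgAt]
  constructor <;> omega

lemma X0.conn (hd : 2 ≤ d) (hL : 1 ≤ L₀) (hℓ : 1000 ≤ ℓ₀) (hκ : 20 ≤ κ) {x z y : V d}
    (hz : z ∈ X0 ℓ₀ L₀ κ x) (hy : y ∈ X0 ℓ₀ L₀ κ x) :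
    Relation.ReflTransGen (fun u v => ladj (Lsc ℓ₀ L₀ 0) u v ∧ u ∈ X0 ℓ₀ L₀ κ x ∧
      v ∈ X0 ℓ₀ L₀ κ x) z y := by
  have h9 := kk_ge (ℓ₀ := ℓ₀) (L₀ := L₀) hκ 0
  have h10 := Lsc_pos hℓ hL 0
  exact ann_conn hd (by omega) (by omega) x hz hy

lemma X0.cross (hL : 1 ≤ L₀) (hℓ : 1000 ≤ ℓ₀) (hκ : 20 ≤ κ) {x : V d} {S : Set (V d)}
    (hS : Adm ℓ₀ L₀ κ 0 x S) : ∃ z ∈ X0 ℓ₀ L₀ κ x, (boxI z (Lsc ℓ₀ L₀ 0) ∩ S).Nonempty := by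
  have h9 := kk_ge (ℓ₀ := ℓ₀) (L₀ := L₀) hκ 0
  have h10 := Lsc_pos hℓ hL 0
  obtain ⟨z, hz, hzS, hz1, hz2⟩ := GFFperc.cross hS (Lsc ℓ₀ L₀ 0)
    (r := 175 * kk ℓ₀ L₀ κ 0 / 20) (by omega) (by omega)
  exact ⟨z, ⟨hz, by omega, by omega⟩, hzS⟩

lemma X0.fin (hℓ : 1000 ≤ ℓ₀) {x : V d} :
    (X0 ℓ₀ L₀ κ x).Finite ∧ (X0 ℓ₀ L₀ κ x).ncard ≤ (9 * κ * ℓ₀ + 2) ^ d := by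
  have h := Xann_finite (Lsc ℓ₀ L₀ 0) (9 * κ * ℓ₀) x
  have hs : X0 ℓ₀ L₀ κ x ⊆ {z | z ∈ lat d (Lsc ℓ₀ L₀ 0) ∧ dinf z x ≤ 9 * κ * ℓ₀ * Lsc ℓ₀ L₀ 0} := by
    rintro z ⟨hz, _, hz2⟩
    refine ⟨hz, ?_⟩
    have h5 : 9 * κ * ℓ₀ * Lsc ℓ₀ L₀ 0 = 9 * (ℓ₀ * kk ℓ₀ L₀ κ 0) := by
      unfold kk; ring
    have h6 : 1 * kk ℓ₀ L₀ κ 0 ≤ ℓ₀ * kk ℓ₀ L₀ κ 0 := Nat.mul_le_mul_right _ (by omega)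
    rw [h5]
    omega
  exact ⟨h.1.subset hs, (Set.ncard_le_ncard hs h.1).trans h.2⟩

lemma X0.good (hκ : 20 ≤ κ) {x z : V d} (hx : ¬ Bad ℓ₀ L₀ κ F H ω 0 x) (hz : z ∈ X0 ℓ₀ L₀ κ x) :
    GoodBox ℓ₀ L₀ F H ω 0 (0, z) := by
  refine ⟨fun _ => ?_, fun j hj hj0 => ?_⟩
  · by_contra hc
    obtain ⟨h0, h1, h2⟩ := hz
    exact hx ⟨z, h0, by omega, hc⟩
  · exfalso
    have : 1 ≤ max (0, z).1 1 := le_max_right _ _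
    omega

open Classical in
lemma card_image_filter (n m : ℕ) (P : Finset (V d)) :
    ((P.image fun z => (n, z)).filter fun b => b.1 = m).card ≤ if m = n then P.card else 0 := by
  split_ifs with h
  · exact (Finset.card_filter_le _ _).trans Finset.card_image_le
  · rw [Nat.le_zero, Finset.card_eq_zero, Finset.filter_eq_empty_iff]
    intro b hb
    obtain ⟨z, _, rfl⟩ := Finset.mem_image.1 hb
    exact fun h' => h h'.symm

open Classical in
lemma half_base (hd : 2 ≤ d) (hL : 1 ≤ L₀) (hℓ : 1000 ≤ ℓ₀) (hκ : 20 ≤ κ)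
    (hN : (9 * κ * ℓ₀ + 2) ^ d ≤ N) {x : V d} (hx : ¬ Bad ℓ₀ L₀ κ F H ω 0 x) {S T : Set (V d)}
    (hS : Adm ℓ₀ L₀ κ 0 x S) (hT : Adm ℓ₀ L₀ κ 0 x T) :
    ∃ ℬ, HalfB ℓ₀ L₀ κ N F H ω 0 x S T ℬ := by
  obtain ⟨zT, hzT, pT, hpT, hpT'⟩ := X0.cross hL hℓ hκ hT
  obtain ⟨zS, hzS, hzS'⟩ := X0.cross hL hℓ hκ hS
  -- general construction
  have gen : ∀ (P : Finset (V d)) (b : V d), b ∈ P → (∀ z ∈ P, z ∈ X0 ℓ₀ L₀ κ x) →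
      IsConnSet (UB (Lsc ℓ₀ L₀ 0) (P : Set (V d))) → (boxI b (Lsc ℓ₀ L₀ 0) ∩ S).Nonempty →
      (∀ z ∈ P, z ≠ b → ¬ (boxI z (Lsc ℓ₀ L₀ 0) ∩ S).Nonempty) → zT ∈ P →
      ∃ ℬ, HalfB ℓ₀ L₀ κ N F H ω 0 x S T ℬ := by
    intro P b hb hPX hconn hbS hdis hT
    have hmem : ∀ c ∈ P.image (fun z => ((0 : ℕ), z)), ∃ z ∈ P, c = (0, z) := by
      intro c hc; obtain ⟨z, hz, rfl⟩ := Finset.mem_image.1 hc; exact ⟨z, hz, rfl⟩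
    refine ⟨P.image fun z => (0, z), ?_, ?_, ?_, ?_, ?_, ?_, ?_, ?_, ?_⟩
    · intro c hc; obtain ⟨z, hz, rfl⟩ := hmem c hc; exact .inr rfl
    · intro c hc; obtain ⟨z, hz, rfl⟩ := hmem c hc; exact (hPX z hz).1
    · intro c hc; obtain ⟨z, hz, rfl⟩ := hmem c hc; exact X0.sg hL hℓ hκ (hPX z hz)
    · rw [UF_image]; exact hconn
    · refine ⟨(0, b), Finset.mem_image.2 ⟨b, hb, rfl⟩, rfl, hbS, ?_⟩
      intro c hc; obtain ⟨z, hz, rfl⟩ := hmem c hc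
      intro hne
      exact not_nonempty_iff_eq_empty.1 (hdis z hz fun h => hne (by rw [h]))
    · rw [UF_image]; exact ⟨pT, mem_UB.2 ⟨zT, hT, hpT⟩, hpT'⟩
    · intro c hc; obtain ⟨z, hz, rfl⟩ := hmem c hc; intro h; simp at h
    · intro m
      refine (Finset.card_filter_le _ _).trans (Finset.card_image_le.trans ?_)
      rw [if_pos rfl]
      refine le_trans ?_ hN
      refine le_trans ?_ (X0.fin (L₀ := L₀) (κ := κ) (x := x) hℓ).2
      rw [← Set.ncard_coe_finset]
      exact Set.ncard_le_ncard hPX (X0.fin hℓ).1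
    · intro c hc; obtain ⟨z, hz, rfl⟩ := hmem c hc; exact X0.good hκ hx (hPX z hz)
  by_cases hN1 : (boxI zT (Lsc ℓ₀ L₀ 0) ∩ S).Nonempty
  · refine gen {zT} zT (by simp) (by simpa using hzT) ?_ hN1 (by simp) (by simp)
    have : UB (Lsc ℓ₀ L₀ 0) (({zT} : Finset (V d)) : Set (V d)) = boxI zT (Lsc ℓ₀ L₀ 0) := by
      simp [UB]
    rw [this]; exact isConn_boxI _ _
  · obtain ⟨w', b, hw, hb, hbS⟩ := extract1 (N := fun z => (boxI z (Lsc ℓ₀ L₀ 0) ∩ S).Nonempty)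
      (X0.conn hd hL hℓ hκ hzT hzS) hN1 hzS'
    set Y : Set (V d) := {z | z ∈ X0 ℓ₀ L₀ κ x ∧ ¬ (boxI z (Lsc ℓ₀ L₀ 0) ∩ S).Nonempty} with hY
    have hw' : w' ∈ rset (Lsc ℓ₀ L₀ 0) Y zT :=
      Relation.ReflTransGen.mono (fun u v h => ⟨h.1.1, ⟨h.1.2.1, h.2.1⟩, ⟨h.1.2.2, h.2.2⟩⟩) _ _ hw
    have hsub : rset (Lsc ℓ₀ L₀ 0) Y zT ⊆ Y := rset_sub ⟨hzT, hN1⟩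
    have hfin : (rset (Lsc ℓ₀ L₀ 0) Y zT).Finite :=
      (X0.fin (L₀ := L₀) (κ := κ) (x := x) hℓ).1.subset fun z hz => (hsub hz).1
    refine gen (insert b hfin.toFinset) b (by simp) ?_ ?_ hbS ?_ ?_
    · intro z hz
      rcases Finset.mem_insert.1 hz with rfl | hz
      · exact hb.2.2
      · exact (hsub (hfin.mem_toFinset.1 hz)).1
    · have : UB (Lsc ℓ₀ L₀ 0) ((insert b hfin.toFinset : Finset (V d)) : Set (V d)) =
        UB (Lsc ℓ₀ L₀ 0) (rset (Lsc ℓ₀ L₀ 0) Y zT) ∪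
          (boxI w' (Lsc ℓ₀ L₀ 0) ∪ boxI b (Lsc ℓ₀ L₀ 0)) := by
        ext p
        simp only [mem_UB, mem_union, Finset.coe_insert, Set.Finite.coe_toFinset, mem_insert_iff]
        constructor
        · rintro ⟨z, rfl | hz, hp⟩
          · exact .inr (.inr hp)
          · exact .inl ⟨z, hz, hp⟩
        · rintro (⟨z, hz, hp⟩ | hp | hp)
          · exact ⟨z, .inr hz, hp⟩
          · exact ⟨w', .inr hw', hp⟩
          · exact ⟨b, .inl rfl, hp⟩
      rw [this]
      exact isConn_rset.union (isConn_two hb.1)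
        ⟨w', mem_UB.2 ⟨w', hw', self_mem_boxI _ _⟩, .inl (self_mem_boxI _ _)⟩
    · intro z hz hzb
      rcases Finset.mem_insert.1 hz with rfl | hz
      · exact absurd rfl hzb
      · exact (hsub (hfin.mem_toFinset.1 hz)).2
    · exact Finset.mem_insert_of_mem (hfin.mem_toFinset.2 .refl)

lemma HalfB.lift (hℓ : 1000 ≤ ℓ₀) (hL : 1 ≤ L₀) (hκ : 20 ≤ κ) {n : ℕ} {x y : V d}
    {S T T' : Set (V d)} {ℬ : Finset (ℕ × V d)} (h : HalfB ℓ₀ L₀ κ N F H ω n y S T ℬ)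
    (hx : ¬ Bad ℓ₀ L₀ κ F H ω (n + 1) x) {lo : ℕ} (h1 : 172 ≤ lo) (h2 : lo ≤ 177)
    (hy : InR ℓ₀ L₀ κ n x lo y) (hT : (UF ℓ₀ L₀ ℬ ∩ T').Nonempty) :
    HalfB ℓ₀ L₀ κ N F H ω (n + 1) x S T' ℬ := by
  have hsub : ∀ b ∈ ℬ, boxI b.2 (Lsc ℓ₀ L₀ b.1) ⊆ SgAt d ℓ₀ L₀ κ (n + 1) x := by
    intro b hb p hp
    exact hy.sg hℓ hL hκ h1 h2 (mem_SgAt.1 (h.sub b hb hp)).1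
  refine ⟨fun b hb => ?_, h.lt, hsub, h.conn, h.meetS, hT, h.far, fun m => ?_, fun b hb => ?_⟩
  · have := h.lvl b hb; omega
  · refine (h.count m).trans ?_
    rw [if_neg (by omega : ¬ n + 1 = 0)]; split_ifs <;> omega
  · exact (h.good b hb).lift hκ hx (hsub b hb (self_mem_boxI _ _))

/-- closeness of a box to a set -/
def Nr (L k : ℕ) (S : Set (V d)) (z : V d) : Prop := ∃ s ∈ S, ∃ p ∈ boxI z L, dinf p s < k

lemma Nr.pt {L k : ℕ} {S : Set (V d)} {z : V d} (h : Nr L k S z) :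
    ∃ s ∈ S, dinf s z ≤ k + L := by
  obtain ⟨s, hs, p, hp, h⟩ := h
  refine ⟨s, hs, ?_⟩
  have h1 := dinf_tri s p z
  have h2 := dinf_comm s p
  have h3 := mem_boxI.1 hp
  omega

lemma Nr.of_inter {L k : ℕ} (hk : 0 < k) {S : Set (V d)} {z : V d}
    (h : (boxI z L ∩ S).Nonempty) : Nr L k S z := by
  obtain ⟨p, hp, hpS⟩ := h
  exact ⟨p, hpS, p, hp, by rw [dinf_self]; exact hk⟩

lemma not_Nr_far {L k : ℕ} {S : Set (V d)} {z : V d} (h : ¬ Nr L k S z) :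
    setDistGE (boxI z L) S k := by
  intro a ha s hs
  by_contra hc
  exact h ⟨s, hs, a, ha, by omega⟩

lemma not_Nr_disj {L k : ℕ} (hk : 0 < k) {S : Set (V d)} {z : V d} (h : ¬ Nr L k S z) :
    boxI z L ∩ S = ∅ := by
  by_contra hc
  exact h (.of_inter hk (nonempty_iff_ne_empty.2 hc))

open Classical in
lemma half_step (hd : 2 ≤ d) (hL : 1 ≤ L₀) (hℓ : 1000 ≤ ℓ₀) (hκ : 20 ≤ κ)
    (hN : (9 * κ * ℓ₀ + 2) ^ d ≤ N) {n : ℕ}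
    (ih : ∀ y : V d, ¬ Bad ℓ₀ L₀ κ F H ω n y → ∀ S T : Set (V d), Adm ℓ₀ L₀ κ n y S →
      Adm ℓ₀ L₀ κ n y T → ∃ ℬ, HalfB ℓ₀ L₀ κ N F H ω n y S T ℬ)
    {x : V d} (hx : ¬ Bad ℓ₀ L₀ κ F H ω (n + 1) x) {S T : Set (V d)}
    (hS : Adm ℓ₀ L₀ κ (n + 1) x S) (hT : Adm ℓ₀ L₀ κ (n + 1) x T) :
    ∃ ℬ, HalfB ℓ₀ L₀ κ N F H ω (n + 1) x S T ℬ := by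
  obtain ⟨lo, hlo1, hlo2, hcl⟩ := exists_clean hx
  obtain ⟨zT, hzT, pT, hpT, hpT'⟩ := XX.cross hℓ hL hκ hlo1 hlo2 hT
  obtain ⟨zS, hzS, hzS'⟩ := XX.cross hℓ hL hκ hlo1 hlo2 hS
  have h8 := kk_succ (L₀ := L₀) (κ := κ) hℓ n
  have h9 := kk_ge (ℓ₀ := ℓ₀) (L₀ := L₀) hκ n
  have h10 := Lsc_pos hℓ hL n
  set L := Lsc ℓ₀ L₀ n with hLdef
  set k := kk ℓ₀ L₀ κ n with hkdef
  have hk0 : 0 < k := by omega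
  have hXR : ∀ z ∈ XX ℓ₀ L₀ κ n x lo, InR ℓ₀ L₀ κ n x lo z := fun z hz =>
    XX.near hℓ hlo1 hz (by rw [dinf_self]; omega)
  have hXB : ∀ z ∈ XX ℓ₀ L₀ κ n x lo, ¬ Bad ℓ₀ L₀ κ F H ω n z := fun z hz =>
    hcl z hz.1 (hXR z hz).1 (hXR z hz).2
  by_cases hN1 : Nr L k S zT
  · obtain ⟨s, hs, hsz⟩ := hN1.pt
    obtain ⟨ℬ, hℬ⟩ := ih zT (hXB zT hzT) S T
      ((hXR zT hzT).adm hℓ hlo1 hlo2 hS hs (by omega))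
      ((hXR zT hzT).adm hℓ hlo1 hlo2 hT hpT' (by have := mem_boxI.1 hpT; omega))
    exact ⟨ℬ, hℬ.lift hℓ hL hκ hx hlo1 hlo2 (hXR zT hzT) hℬ.meetT⟩
  obtain ⟨w', b, hw, hb, hbS⟩ := extract1 (N := Nr L k S)
      (XX.conn hd hℓ hL hκ hzT hzS) hN1 (.of_inter hk0 hzS')
  set Y : Set (V d) := {z | z ∈ XX ℓ₀ L₀ κ n x lo ∧ ¬ Nr L k S z} with hY
  have hw' : w' ∈ rset L Y zT :=
    Relation.ReflTransGen.mono (fun u v h => ⟨h.1.1, ⟨h.1.2.1, h.2.1⟩, ⟨h.1.2.2, h.2.2⟩⟩) _ _ hw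
  have hsub : rset L Y zT ⊆ Y := rset_sub ⟨hzT, hN1⟩
  have hXf := XX.fin (ℓ₀ := ℓ₀) (L₀ := L₀) (κ := κ) (n := n) (x := x) hlo2
  have hfin : (rset L Y zT).Finite := hXf.1.subset fun z hz => (hsub hz).1
  have hw'X : w' ∈ XX ℓ₀ L₀ κ n x lo := (hsub hw').1
  obtain ⟨s, hs, hsb⟩ := hbS.pt
  have hsw : dinf s w' ≤ 8 * k := by
    have h1 := dinf_tri s b w'
    have h2 := ladj_dinf hb.1
    have h3 := dinf_comm b w'
    omega
  have hTfar : ∀ t, 10 * kk ℓ₀ L₀ κ (n + 1) ≤ dinf t x → 10 * k ≤ dinf t w' := by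
    intro t ht
    have h1 := dinf_tri t w' x
    have h2 := ((hXR w' hw'X).bds hlo1 hlo2).2
    omega
  have hpTU : pT ∈ UB L (rset L Y zT) := mem_UB.2 ⟨zT, .refl, hpT⟩
  have hadmT : Adm ℓ₀ L₀ κ n w' (T ∪ UB L (rset L Y zT)) := by
    have hT1 : ∀ t ∈ T, ∃ t', Rch (T ∪ UB L (rset L Y zT)) t t' ∧ 10 * k ≤ dinf t' w' := by
      intro t ht
      obtain ⟨t', h1, h2⟩ := hT.1 t ht
      exact ⟨t', h1.mono subset_union_left, hTfar t' h2⟩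
    refine ⟨?_, w', .inr (mem_UB.2 ⟨w', hw', self_mem_boxI _ _⟩), by rw [dinf_self]; omega⟩
    rintro t (ht | ht)
    · exact hT1 t ht
    · obtain ⟨t', h1, h2⟩ := hT1 pT hpT'
      exact ⟨t', ((isConn_rset.rch ht hpTU).mono subset_union_right).trans h1, h2⟩
  obtain ⟨ℬ, hℬ⟩ := ih w' (hXB w' hw'X) S _ ((hXR w' hw'X).adm hℓ hlo1 hlo2 hS hs hsw) hadmT
  obtain ⟨q, hq, hqT | hqP⟩ := hℬ.meetT
  · exact ⟨ℬ, hℬ.lift hℓ hL hκ hx hlo1 hlo2 (hXR w' hw'X) ⟨q, hq, hqT⟩⟩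
  have hℬ' := hℬ.lift (T' := univ) hℓ hL hκ hx hlo1 hlo2 (hXR w' hw'X) ⟨q, hq, trivial⟩
  set P : Finset (V d) := hfin.toFinset with hP
  have hmem : ∀ c ∈ P.image (fun z => (n, z)), ∃ z ∈ rset L Y zT, c = (n, z) := by
    intro c hc; obtain ⟨z, hz, rfl⟩ := Finset.mem_image.1 hc
    exact ⟨z, hfin.mem_toFinset.1 hz, rfl⟩
  have hPcard : P.card ≤ N := by
    refine le_trans ?_ (hXf.2.trans hN)
    rw [← Set.ncard_coe_finset]
    refine Set.ncard_le_ncard (fun z hz => ?_) hXf.1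
    exact (hsub (hfin.mem_toFinset.1 hz)).1
  have hPsub : ∀ z ∈ rset L Y zT, boxI z L ⊆ SgAt d ℓ₀ L₀ κ (n + 1) x := by
    intro z hz p hp
    exact (hXR z (hsub hz).1).sg hℓ hL hκ hlo1 hlo2 (by have := mem_boxI.1 hp; omega)
  have hUP : UF ℓ₀ L₀ (P.image fun z => (n, z)) = UB L (rset L Y zT) := by
    rw [UF_image, hP, Set.Finite.coe_toFinset]
  obtain ⟨b₁, hb₁, hb₁0, hb₁S, hb₁d⟩ := hℬ'.meetS
  refine ⟨ℬ ∪ P.image (fun z => (n, z)), ?_, ?_, ?_, ?_, ?_, ?_, ?_, ?_, ?_⟩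
  · intro c hc
    rcases Finset.mem_union.1 hc with hc | hc
    · exact hℬ'.lvl c hc
    · obtain ⟨z, hz, rfl⟩ := hmem c hc; left; simp
  · intro c hc
    rcases Finset.mem_union.1 hc with hc | hc
    · exact hℬ'.lt c hc
    · obtain ⟨z, hz, rfl⟩ := hmem c hc; exact (hsub hz).1.1
  · intro c hc
    rcases Finset.mem_union.1 hc with hc | hc
    · exact hℬ'.sub c hc
    · obtain ⟨z, hz, rfl⟩ := hmem c hc; exact hPsub z hz
  · rw [UF_union, hUP]
    exact hℬ.conn.union isConn_rset ⟨q, hq, hqP⟩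
  · refine ⟨b₁, Finset.mem_union_left _ hb₁, hb₁0, hb₁S, ?_⟩
    intro c hc hne
    rcases Finset.mem_union.1 hc with hc | hc
    · exact hb₁d c hc hne
    · obtain ⟨z, hz, rfl⟩ := hmem c hc; exact not_Nr_disj hk0 (hsub hz).2
  · rw [UF_union, hUP]
    exact ⟨pT, .inr hpTU, hpT'⟩
  · intro c hc
    rcases Finset.mem_union.1 hc with hc | hc
    · exact hℬ'.far c hc
    · obtain ⟨z, hz, rfl⟩ := hmem c hc; intro _; exact not_Nr_far (hsub hz).2
  · intro m
    rw [if_neg (by omega), Finset.filter_union]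
    refine (Finset.card_union_le _ _).trans ?_
    have h1 := card_image_filter n m P
    have h2 := hℬ.count m
    by_cases hm : m = n
    · rw [if_pos hm] at h1
      by_cases hn : n = 0
      · rw [if_pos hn] at h2; omega
      · have h3 : (ℬ.filter fun b => b.1 = m) = ∅ := by
          rw [Finset.filter_eq_empty_iff]
          intro c hc; have := hℬ.lvl c hc; omega
        rw [h3, Finset.card_empty]; omega
    · rw [if_neg hm] at h1
      split_ifs at h2 <;> omega
  · intro c hc
    rcases Finset.mem_union.1 hc with hc | hc
    · exact hℬ'.good c hc
    · obtain ⟨z, hz, rfl⟩ := hmem c hc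
      exact (GoodBox.self hκ (hsub hz).1.1 (hXB z (hsub hz).1)).lift hκ hx
        (hPsub z hz (self_mem_boxI _ _))

lemma half_all (hd : 2 ≤ d) (hL : 1 ≤ L₀) (hℓ : 1000 ≤ ℓ₀) (hκ : 20 ≤ κ)
    (hN : (9 * κ * ℓ₀ + 2) ^ d ≤ N) (n : ℕ) :
    ∀ y : V d, ¬ Bad ℓ₀ L₀ κ F H ω n y → ∀ S T : Set (V d), Adm ℓ₀ L₀ κ n y S →
      Adm ℓ₀ L₀ κ n y T → ∃ ℬ, HalfB ℓ₀ L₀ κ N F H ω n y S T ℬ := by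
  induction n with
  | zero => intro y hy S T hS hT; exact half_base hd hL hℓ hκ hN hy hS hT
  | succ n ih => intro y hy S T hS hT; exact half_step hd hL hℓ hκ hN ih hy hS hT

end halfs

section fulls
variable {d : ℕ} {Ω : Type*} {ℓ₀ L₀ κ N : ℕ} {F : V d → Set Ω} {H : ℕ → V d → Set Ω} {ω : Ω}

def FullB (ℓ₀ L₀ κ N : ℕ) (F : V d → Set Ω) (H : ℕ → V d → Set Ω) (ω : Ω) (n : ℕ) (x : V d)
    (S₁ S₂ : Set (V d)) (ℬ : Finset (ℕ × V d)) : Prop :=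
  IsBridge d ℓ₀ L₀ κ (2 * N) n (SgAt d ℓ₀ L₀ κ n x) S₁ S₂ ℬ ∧ ∀ b ∈ ℬ, GoodBox ℓ₀ L₀ F H ω n b

open Classical in
lemma full_base (hd : 2 ≤ d) (hL : 1 ≤ L₀) (hℓ : 1000 ≤ ℓ₀) (hκ : 20 ≤ κ)
    (hN : (9 * κ * ℓ₀ + 2) ^ d ≤ N) {x : V d} (hx : ¬ Bad ℓ₀ L₀ κ F H ω 0 x) {S₁ S₂ : Set (V d)}
    (hS₁ : Adm ℓ₀ L₀ κ 0 x S₁) (hS₂ : Adm ℓ₀ L₀ κ 0 x S₂) :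
    ∃ ℬ, FullB ℓ₀ L₀ κ N F H ω 0 x S₁ S₂ ℬ := by
  obtain ⟨z₁, hz₁, hz₁'⟩ := X0.cross hL hℓ hκ hS₁
  obtain ⟨z₂, hz₂, hz₂'⟩ := X0.cross hL hℓ hκ hS₂
  have gen : ∀ (P : Finset (V d)) (a b : V d), a ∈ P → b ∈ P → (∀ z ∈ P, z ∈ X0 ℓ₀ L₀ κ x) →
      IsConnSet (UB (Lsc ℓ₀ L₀ 0) (P : Set (V d))) → (boxI a (Lsc ℓ₀ L₀ 0) ∩ S₁).Nonempty →
      (boxI b (Lsc ℓ₀ L₀ 0) ∩ S₂).Nonempty →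
      (∀ z ∈ P, z ≠ a → z ≠ b → ¬ (boxI z (Lsc ℓ₀ L₀ 0) ∩ S₁).Nonempty ∧
        ¬ (boxI z (Lsc ℓ₀ L₀ 0) ∩ S₂).Nonempty) →
      ∃ ℬ, FullB ℓ₀ L₀ κ N F H ω 0 x S₁ S₂ ℬ := by
    intro P a b ha hb hPX hconn haS hbS hdis
    have hmem : ∀ c ∈ P.image (fun z => ((0 : ℕ), z)), ∃ z ∈ P, c = (0, z) := by
      intro c hc; obtain ⟨z, hz, rfl⟩ := Finset.mem_image.1 hc; exact ⟨z, hz, rfl⟩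
    refine ⟨P.image fun z => (0, z), ⟨?_, ?_, ?_, ?_, ?_⟩, ?_⟩
    · intro c hc; obtain ⟨z, hz, rfl⟩ := hmem c hc
      exact ⟨le_rfl, (hPX z hz).1, X0.sg hL hℓ hκ (hPX z hz)⟩
    · have := UF_image (ℓ₀ := ℓ₀) (L₀ := L₀) 0 P
      rw [← this] at hconn; exact hconn
    · refine ⟨(0, a), Finset.mem_image.2 ⟨a, ha, rfl⟩, (0, b), Finset.mem_image.2 ⟨b, hb, rfl⟩,
        rfl, rfl, haS, hbS, ?_⟩
      intro c hc; obtain ⟨z, hz, rfl⟩ := hmem c hc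
      intro hne hne'
      have := hdis z hz (fun h => hne (by rw [h])) (fun h => hne' (by rw [h]))
      rw [inter_union_distrib_left, not_nonempty_iff_eq_empty.1 this.1,
        not_nonempty_iff_eq_empty.1 this.2, union_empty]
    · intro c hc; obtain ⟨z, hz, rfl⟩ := hmem c hc; intro h; simp at h
    · intro m
      refine (Finset.card_filter_le _ _).trans (Finset.card_image_le.trans ?_)
      have : P.card ≤ N := by
        refine le_trans ?_ hN
        refine le_trans ?_ (X0.fin (L₀ := L₀) (κ := κ) (x := x) hℓ).2
        rw [← Set.ncard_coe_finset]
        exact Set.ncard_le_ncard hPX (X0.fin hℓ).1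
      omega
    · intro c hc; obtain ⟨z, hz, rfl⟩ := hmem c hc; exact X0.good hκ hx (hPX z hz)
  rcases extract (N₁ := fun z => (boxI z (Lsc ℓ₀ L₀ 0) ∩ S₁).Nonempty)
    (N₂ := fun z => (boxI z (Lsc ℓ₀ L₀ 0) ∩ S₂).Nonempty)
    (X0.conn hd hL hℓ hκ hz₁ hz₂) hz₁' hz₂' with ⟨a, h1, h2, h3⟩ | ⟨a, b, h1, h2, h3⟩ |
      ⟨a, w, w', b, h1, haw, hw1, hw2, hw, hb, h2⟩
  · have haX : a ∈ X0 ℓ₀ L₀ κ x := by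
      rcases h3 with rfl | ⟨c, hc⟩
      · exact hz₁
      · exact hc.2.2
    refine gen {a} a a (by simp) (by simp) (by simpa using haX) ?_ h1 h2 (by simp)
    have : UB (Lsc ℓ₀ L₀ 0) (({a} : Finset (V d)) : Set (V d)) = boxI a (Lsc ℓ₀ L₀ 0) := by
      simp [UB]
    rw [this]; exact isConn_boxI _ _
  · refine gen {a, b} a b (by simp) (by simp) ?_ ?_ h1 h2 ?_
    · intro z hz
      simp only [Finset.mem_insert, Finset.mem_singleton] at hz
      rcases hz with rfl | rfl
      · exact h3.2.1
      · exact h3.2.2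
    · have : UB (Lsc ℓ₀ L₀ 0) (({a, b} : Finset (V d)) : Set (V d)) =
          boxI a (Lsc ℓ₀ L₀ 0) ∪ boxI b (Lsc ℓ₀ L₀ 0) := by
        ext p; simp [mem_UB]
      rw [this]; exact isConn_two h3.1
    · intro z hz hza hzb
      simp only [Finset.mem_insert, Finset.mem_singleton] at hz
      tauto
  · set Y : Set (V d) := {z | z ∈ X0 ℓ₀ L₀ κ x ∧ ¬ (boxI z (Lsc ℓ₀ L₀ 0) ∩ S₁).Nonempty ∧
      ¬ (boxI z (Lsc ℓ₀ L₀ 0) ∩ S₂).Nonempty} with hY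
    have hw' : w' ∈ rset (Lsc ℓ₀ L₀ 0) Y w :=
      Relation.ReflTransGen.mono (fun u v h => ⟨h.1.1, ⟨h.1.2.1, h.2.1⟩, ⟨h.1.2.2, h.2.2⟩⟩) _ _ hw
    have hsub : rset (Lsc ℓ₀ L₀ 0) Y w ⊆ Y := rset_sub ⟨haw.2.2, hw1, hw2⟩
    have hfin : (rset (Lsc ℓ₀ L₀ 0) Y w).Finite :=
      (X0.fin (L₀ := L₀) (κ := κ) (x := x) hℓ).1.subset fun z hz => (hsub hz).1
    refine gen (insert a (insert b hfin.toFinset)) a b (by simp) (by simp) ?_ ?_ h1 h2 ?_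
    · intro z hz
      simp only [Finset.mem_insert, Set.Finite.mem_toFinset] at hz
      rcases hz with rfl | rfl | hz
      · exact haw.2.1
      · exact hb.2.2
      · exact (hsub hz).1
    · have : UB (Lsc ℓ₀ L₀ 0) ((insert a (insert b hfin.toFinset) : Finset (V d)) : Set (V d)) =
        (UB (Lsc ℓ₀ L₀ 0) (rset (Lsc ℓ₀ L₀ 0) Y w) ∪
          (boxI w' (Lsc ℓ₀ L₀ 0) ∪ boxI b (Lsc ℓ₀ L₀ 0))) ∪
          (boxI a (Lsc ℓ₀ L₀ 0) ∪ boxI w (Lsc ℓ₀ L₀ 0)) := by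
        ext p
        simp only [mem_UB, mem_union, Finset.coe_insert, Set.Finite.coe_toFinset, mem_insert_iff]
        constructor
        · rintro ⟨z, rfl | rfl | hz, hp⟩
          · exact .inr (.inl hp)
          · exact .inl (.inr (.inr hp))
          · exact .inl (.inl ⟨z, hz, hp⟩)
        · rintro ((⟨z, hz, hp⟩ | hp | hp) | hp | hp)
          · exact ⟨z, .inr (.inr hz), hp⟩
          · exact ⟨w', .inr (.inr hw'), hp⟩
          · exact ⟨b, .inr (.inl rfl), hp⟩
          · exact ⟨a, .inl rfl, hp⟩
          · exact ⟨w, .inr (.inr .refl), hp⟩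
      rw [this]
      refine (isConn_rset.union (isConn_two hb.1)
        ⟨w', mem_UB.2 ⟨w', hw', self_mem_boxI _ _⟩, .inl (self_mem_boxI _ _)⟩).union
        (isConn_two haw.1) ⟨w, .inl (mem_UB.2 ⟨w, .refl, self_mem_boxI _ _⟩), .inr (self_mem_boxI _ _)⟩
    · intro z hz hza hzb
      simp only [Finset.mem_insert, Set.Finite.mem_toFinset] at hz
      rcases hz with rfl | rfl | hz
      · exact absurd rfl hza
      · exact absurd rfl hzb
      · exact (hsub hz).2

lemma FullB.lift (hℓ : 1000 ≤ ℓ₀) (hL : 1 ≤ L₀) (hκ : 20 ≤ κ) {n : ℕ} {x y : V d}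
    {S₁ S₂ : Set (V d)} {ℬ : Finset (ℕ × V d)} (h : FullB ℓ₀ L₀ κ N F H ω n y S₁ S₂ ℬ)
    (hx : ¬ Bad ℓ₀ L₀ κ F H ω (n + 1) x) {lo : ℕ} (h1 : 172 ≤ lo) (h2 : lo ≤ 177)
    (hy : InR ℓ₀ L₀ κ n x lo y) :
    FullB ℓ₀ L₀ κ N F H ω (n + 1) x S₁ S₂ ℬ := by
  have hsub : ∀ b ∈ ℬ, boxI b.2 (Lsc ℓ₀ L₀ b.1) ⊆ SgAt d ℓ₀ L₀ κ (n + 1) x := by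
    intro b hb p hp
    exact hy.sg hℓ hL hκ h1 h2 (mem_SgAt.1 ((h.1.boxes b hb).2.2 hp)).1
  refine ⟨⟨fun b hb => ?_, h.1.conn, h.1.ends, h.1.far, h.1.count⟩, fun b hb => ?_⟩
  · exact ⟨(h.1.boxes b hb).1.trans (by omega), (h.1.boxes b hb).2.1, hsub b hb⟩
  · exact (h.2 b hb).lift hκ hx (hsub b hb (self_mem_boxI _ _))

open Classical in
lemma full_step (hd : 2 ≤ d) (hL : 1 ≤ L₀) (hℓ : 1000 ≤ ℓ₀) (hκ : 20 ≤ κ)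
    (hN : (9 * κ * ℓ₀ + 2) ^ d ≤ N) {n : ℕ}
    (ih : ∀ y : V d, ¬ Bad ℓ₀ L₀ κ F H ω n y → ∀ S T : Set (V d), Adm ℓ₀ L₀ κ n y S →
      Adm ℓ₀ L₀ κ n y T → ∃ ℬ, FullB ℓ₀ L₀ κ N F H ω n y S T ℬ)
    {x : V d} (hx : ¬ Bad ℓ₀ L₀ κ F H ω (n + 1) x) {S₁ S₂ : Set (V d)}
    (hS₁ : Adm ℓ₀ L₀ κ (n + 1) x S₁) (hS₂ : Adm ℓ₀ L₀ κ (n + 1) x S₂) :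
    ∃ ℬ, FullB ℓ₀ L₀ κ N F H ω (n + 1) x S₁ S₂ ℬ := by
  obtain ⟨lo, hlo1, hlo2, hcl⟩ := exists_clean hx
  obtain ⟨z₁, hz₁, hz₁'⟩ := XX.cross hℓ hL hκ hlo1 hlo2 hS₁
  obtain ⟨z₂, hz₂, hz₂'⟩ := XX.cross hℓ hL hκ hlo1 hlo2 hS₂
  have h8 := kk_succ (L₀ := L₀) (κ := κ) hℓ n
  have h9 := kk_ge (ℓ₀ := ℓ₀) (L₀ := L₀) hκ n
  have h10 := Lsc_pos hℓ hL n
  have hkm : ∀ m, m ≤ n → κ * Lsc ℓ₀ L₀ m ≤ kk ℓ₀ L₀ κ n := fun m hm =>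
    kk_mono (L₀ := L₀) (κ := κ) hℓ hm
  set L := Lsc ℓ₀ L₀ n with hLdef
  set k := kk ℓ₀ L₀ κ n with hkdef
  have hk0 : 0 < k := by omega
  have hXR : ∀ z ∈ XX ℓ₀ L₀ κ n x lo, InR ℓ₀ L₀ κ n x lo z := fun z hz =>
    XX.near hℓ hlo1 hz (by rw [dinf_self]; omega)
  have hXB : ∀ z ∈ XX ℓ₀ L₀ κ n x lo, ¬ Bad ℓ₀ L₀ κ F H ω n z := fun z hz =>
    hcl z hz.1 (hXR z hz).1 (hXR z hz).2
  -- conclusion when both sets are close to some lattice point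
  have done : ∀ y ∈ latt d ℓ₀ L₀ n, InR ℓ₀ L₀ κ n x lo y → ∀ s₁ ∈ S₁, ∀ s₂ ∈ S₂,
      dinf s₁ y ≤ 8 * k → dinf s₂ y ≤ 8 * k → ∃ ℬ, FullB ℓ₀ L₀ κ N F H ω (n + 1) x S₁ S₂ ℬ := by
    intro y hy hyR s₁ hs₁ s₂ hs₂ h1 h2
    obtain ⟨ℬ, hℬ⟩ := ih y (hcl y hy hyR.1 hyR.2) S₁ S₂ (hyR.adm hℓ hlo1 hlo2 hS₁ hs₁ h1)
      (hyR.adm hℓ hlo1 hlo2 hS₂ hs₂ h2)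
    exact ⟨ℬ, hℬ.lift hℓ hL hκ hx hlo1 hlo2 hyR⟩
  rcases extract (N₁ := Nr L k S₁) (N₂ := Nr L k S₂)
    (XX.conn hd hℓ hL hκ hz₁ hz₂) (.of_inter hk0 hz₁') (.of_inter hk0 hz₂') with
      ⟨a, h1, h2, h3⟩ | ⟨a, b, h1, h2, h3⟩ | ⟨a, w, w', b, h1, haw, hw1, hw2, hw, hb, h2⟩
  · have haX : a ∈ XX ℓ₀ L₀ κ n x lo := by
      rcases h3 with rfl | ⟨c, hc⟩
      · exact hz₁
      · exact hc.2.2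
    obtain ⟨s₁, hs₁, hd₁⟩ := h1.pt
    obtain ⟨s₂, hs₂, hd₂⟩ := h2.pt
    exact done a haX.1 (hXR a haX) s₁ hs₁ s₂ hs₂ (by omega) (by omega)
  · obtain ⟨s₁, hs₁, hd₁⟩ := h1.pt
    obtain ⟨s₂, hs₂, hd₂⟩ := h2.pt
    have h4 := ladj_dinf h3.1
    have h5 := dinf_tri s₁ a b
    exact done b h3.2.2.1 (hXR b h3.2.2) s₁ hs₁ s₂ hs₂ (by omega) (by omega)
  obtain ⟨s₁, hs₁, hd₁⟩ := h1.pt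
  obtain ⟨s₂, hs₂, hd₂⟩ := h2.pt
  have hs₁w : dinf s₁ w ≤ k + 4 * L := by
    have h4 := ladj_dinf haw.1
    have h5 := dinf_tri s₁ a w
    omega
  have hs₂w : dinf s₂ w' ≤ k + 4 * L := by
    have h4 := ladj_dinf hb.1
    have h5 := dinf_tri s₂ b w'
    have h6 := dinf_comm b w'
    omega
  have hwX := haw.2.2
  have hwX' := hb.2.1
  by_cases hc1 : ∃ s ∈ S₂, dinf w s ≤ 12 * k
  · obtain ⟨s, hs, hws⟩ := hc1
    obtain ⟨y, hy, hyw, hys⟩ := midpoint L hws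
    have h5 := dinf_tri s₁ w y
    have h6 := dinf_comm w y
    have h7 := dinf_comm s y
    exact done y hy (XX.near hℓ hlo1 hwX (by omega)) s₁ hs₁ s hs (by omega) (by omega)
  by_cases hc2 : ∃ s ∈ S₁, dinf w' s ≤ 12 * k
  · obtain ⟨s, hs, hws⟩ := hc2
    obtain ⟨y, hy, hyw, hys⟩ := midpoint L hws
    have h5 := dinf_tri s₂ w' y
    have h6 := dinf_comm w' y
    have h7 := dinf_comm s y
    exact done y hy (XX.near hℓ hlo1 hwX' (by omega)) s hs s₂ hs₂ (by omega) (by omega)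
  push Not at hc1 hc2
  have hww : 10 * k ≤ dinf w w' := by
    have h5 := dinf_tri w w' s₂
    have h6 := dinf_comm w' s₂
    have h7 := hc1 s₂ hs₂
    omega
  set Y : Set (V d) := {z | z ∈ XX ℓ₀ L₀ κ n x lo ∧ ¬ Nr L k S₁ z ∧ ¬ Nr L k S₂ z} with hY
  have hw' : w' ∈ rset L Y w :=
    Relation.ReflTransGen.mono (fun u v h => ⟨h.1.1, ⟨h.1.2.1, h.2.1⟩, ⟨h.1.2.2, h.2.2⟩⟩) _ _ hw
  have hww0 : w ∈ rset L Y w := .refl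
  have hsub : rset L Y w ⊆ Y := rset_sub ⟨hwX, hw1, hw2⟩
  have hXf := XX.fin (ℓ₀ := ℓ₀) (L₀ := L₀) (κ := κ) (n := n) (x := x) hlo2
  have hfin : (rset L Y w).Finite := hXf.1.subset fun z hz => (hsub hz).1
  have hwU : w ∈ UB L (rset L Y w) := mem_UB.2 ⟨w, hww0, self_mem_boxI _ _⟩
  have hwU' : w' ∈ UB L (rset L Y w) := mem_UB.2 ⟨w', hw', self_mem_boxI _ _⟩
  have hT1 : Adm ℓ₀ L₀ κ n w (UB L (rset L Y w)) :=
    ⟨fun t ht => ⟨w', isConn_rset.rch ht hwU', by rw [dinf_comm]; exact hww⟩,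
      w, hwU, by rw [dinf_self]; omega⟩
  have hT2 : Adm ℓ₀ L₀ κ n w' (UB L (rset L Y w)) :=
    ⟨fun t ht => ⟨w, isConn_rset.rch ht hwU, hww⟩, w', hwU', by rw [dinf_self]; omega⟩
  obtain ⟨ℬ₁, hB₁⟩ := half_all hd hL hℓ hκ hN n w (hXB w hwX) S₁ _
    ((hXR w hwX).adm hℓ hlo1 hlo2 hS₁ hs₁ (by omega)) hT1
  obtain ⟨ℬ₂, hB₂⟩ := half_all hd hL hℓ hκ hN n w' (hXB w' hwX') S₂ _
    ((hXR w' hwX').adm hℓ hlo1 hlo2 hS₂ hs₂ (by omega)) hT2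
  have hB₁' := hB₁.lift hℓ hL hκ hx hlo1 hlo2 (hXR w hwX) hB₁.meetT
  have hB₂' := hB₂.lift hℓ hL hκ hx hlo1 hlo2 (hXR w' hwX') hB₂.meetT
  have far1 : ∀ c ∈ ℬ₁, setDistGE (boxI c.2 (Lsc ℓ₀ L₀ c.1)) S₂ k := by
    intro c hc p hp s hs
    have e1 := (mem_SgAt.1 (hB₁.sub c hc hp)).1
    have e2 := hc1 s hs
    have e3 := dinf_tri w p s
    have e4 := dinf_comm w p
    omega
  have far2 : ∀ c ∈ ℬ₂, setDistGE (boxI c.2 (Lsc ℓ₀ L₀ c.1)) S₁ k := by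
    intro c hc p hp s hs
    have e1 := (mem_SgAt.1 (hB₂.sub c hc hp)).1
    have e2 := hc2 s hs
    have e3 := dinf_tri w' p s
    have e4 := dinf_comm w' p
    omega
  have disj : ∀ {A S : Set (V d)}, setDistGE A S k → A ∩ S = ∅ := by
    intro A S h
    refine box_inter_empty fun p hp hpS => ?_
    have := h p hp p hpS
    rw [dinf_self] at this
    omega
  have lev1 : ∀ c ∈ ℬ₁, c.1 ≤ n := fun c hc => by have := hB₁.lvl c hc; omega
  have lev2 : ∀ c ∈ ℬ₂, c.1 ≤ n := fun c hc => by have := hB₂.lvl c hc; omega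
  set P : Finset (V d) := hfin.toFinset with hP
  have hmem : ∀ c ∈ P.image (fun z => (n, z)), ∃ z ∈ rset L Y w, c = (n, z) := by
    intro c hc; obtain ⟨z, hz, rfl⟩ := Finset.mem_image.1 hc
    exact ⟨z, hfin.mem_toFinset.1 hz, rfl⟩
  have hPcard : P.card ≤ N := by
    refine le_trans ?_ (hXf.2.trans hN)
    rw [← Set.ncard_coe_finset]
    refine Set.ncard_le_ncard (fun z hz => ?_) hXf.1
    exact (hsub (hfin.mem_toFinset.1 hz)).1
  have hPsub : ∀ z ∈ rset L Y w, boxI z L ⊆ SgAt d ℓ₀ L₀ κ (n + 1) x := by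
    intro z hz p hp
    exact (hXR z (hsub hz).1).sg hℓ hL hκ hlo1 hlo2 (by have := mem_boxI.1 hp; omega)
  have hUP : UF ℓ₀ L₀ (P.image fun z => (n, z)) = UB L (rset L Y w) := by
    rw [UF_image, hP, Set.Finite.coe_toFinset]
  obtain ⟨b₁, hb₁, hb₁0, hb₁S, hb₁d⟩ := hB₁.meetS
  obtain ⟨b₂, hb₂, hb₂0, hb₂S, hb₂d⟩ := hB₂.meetS
  refine ⟨(ℬ₁ ∪ P.image (fun z => (n, z))) ∪ ℬ₂, ⟨?_, ?_, ?_, ?_, ?_⟩, ?_⟩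
  · intro c hc
    rcases Finset.mem_union.1 hc with hc | hc
    · rcases Finset.mem_union.1 hc with hc | hc
      · exact ⟨(lev1 c hc).trans (by omega), hB₁.lt c hc, hB₁'.sub c hc⟩
      · obtain ⟨z, hz, rfl⟩ := hmem c hc; exact ⟨by simp, (hsub hz).1.1, hPsub z hz⟩
    · exact ⟨(lev2 c hc).trans (by omega), hB₂.lt c hc, hB₂'.sub c hc⟩
  · change IsConnSet (UF ℓ₀ L₀ _)
    rw [UF_union, UF_union, hUP]
    obtain ⟨q, hq, hq'⟩ := hB₁.meetT
    obtain ⟨q₂, hq₂, hq₂'⟩ := hB₂.meetT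
    exact (hB₁.conn.union isConn_rset ⟨q, hq, hq'⟩).union hB₂.conn ⟨q₂, .inr hq₂', hq₂⟩
  · refine ⟨b₁, Finset.mem_union_left _ (Finset.mem_union_left _ hb₁), b₂,
      Finset.mem_union_right _ hb₂, hb₁0, hb₂0, hb₁S, hb₂S, ?_⟩
    intro c hc hne hne'
    rw [inter_union_distrib_left]
    rcases Finset.mem_union.1 hc with hc | hc
    · rcases Finset.mem_union.1 hc with hc | hc
      · rw [hb₁d c hc hne, disj (far1 c hc), union_empty]
      · obtain ⟨z, hz, rfl⟩ := hmem c hc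
        rw [not_Nr_disj hk0 (hsub hz).2.1, not_Nr_disj hk0 (hsub hz).2.2, union_empty]
    · rw [hb₂d c hc hne', disj (far2 c hc), union_empty]
  · intro c hc hc1' p hp s hs
    rcases Finset.mem_union.1 hc with hc | hc
    · rcases Finset.mem_union.1 hc with hc | hc
      · rcases hs with hs | hs
        · exact hB₁.far c hc hc1' p hp s hs
        · exact (hkm _ (lev1 c hc)).trans (far1 c hc p hp s hs)
      · obtain ⟨z, hz, rfl⟩ := hmem c hc
        rcases hs with hs | hs
        · exact not_Nr_far (hsub hz).2.1 p hp s hs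
        · exact not_Nr_far (hsub hz).2.2 p hp s hs
    · rcases hs with hs | hs
      · exact (hkm _ (lev2 c hc)).trans (far2 c hc p hp s hs)
      · exact hB₂.far c hc hc1' p hp s hs
  · intro m
    rw [Finset.filter_union, Finset.filter_union]
    refine (Finset.card_union_le _ _).trans ((Nat.add_le_add_right (Finset.card_union_le _ _) _).trans ?_)
    have e1 := card_image_filter n m P
    have e2 := hB₁.count m
    have e3 := hB₂.count m
    by_cases hm : m = n
    · rw [if_pos hm] at e1
      by_cases hn : n = 0
      · rw [if_pos hn] at e2 e3; omega
      · have h3 : (ℬ₁.filter fun b => b.1 = m) = ∅ := by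
          rw [Finset.filter_eq_empty_iff]
          intro c hc; have := hB₁.lvl c hc; omega
        have h4 : (ℬ₂.filter fun b => b.1 = m) = ∅ := by
          rw [Finset.filter_eq_empty_iff]
          intro c hc; have := hB₂.lvl c hc; omega
        rw [h3, h4, Finset.card_empty]; omega
    · rw [if_neg hm] at e1
      split_ifs at e2 e3 <;> omega
  · intro c hc
    rcases Finset.mem_union.1 hc with hc | hc
    · rcases Finset.mem_union.1 hc with hc | hc
      · exact hB₁'.good c hc
      · obtain ⟨z, hz, rfl⟩ := hmem c hc
        exact (GoodBox.self hκ (hsub hz).1.1 (hXB z (hsub hz).1)).lift hκ hx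
          (hPsub z hz (self_mem_boxI _ _))
    · exact hB₂'.good c hc

lemma full_all (hd : 2 ≤ d) (hL : 1 ≤ L₀) (hℓ : 1000 ≤ ℓ₀) (hκ : 20 ≤ κ)
    (hN : (9 * κ * ℓ₀ + 2) ^ d ≤ N) (n : ℕ) :
    ∀ y : V d, ¬ Bad ℓ₀ L₀ κ F H ω n y → ∀ S T : Set (V d), Adm ℓ₀ L₀ κ n y S →
      Adm ℓ₀ L₀ κ n y T → ∃ ℬ, FullB ℓ₀ L₀ κ N F H ω n y S T ℬ := by
  induction n with
  | zero => intro y hy S T hS hT; exact full_base hd hL hℓ hκ hN hy hS hT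
  | succ n ih => intro y hy S T hS hT; exact full_step hd hL hℓ hκ hN ih hy hS hT

/-- tail event -/
def TailBad (ℓ₀ L₀ κ : ℕ) (H : ℕ → V d → Set Ω) (ω : Ω) (n : ℕ) (x : V d) : Prop :=
  ∃ j > n, ∃ z ∈ latt d ℓ₀ L₀ j, dinf z x ≤ 10 * kk ℓ₀ L₀ κ j ∧ ω ∉ H j z

lemma gevent_of (hd : 2 ≤ d) (hL : 1 ≤ L₀) (hℓ : 1000 ≤ ℓ₀) (hκ : 20 ≤ κ)
    (hN : (9 * κ * ℓ₀ + 2) ^ d ≤ N) {n : ℕ} {x : V d} (hx : ¬ Bad ℓ₀ L₀ κ F H ω n x)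
    (ht : ¬ TailBad ℓ₀ L₀ κ H ω n x) (an : Bool) :
    ω ∈ GEvent d ℓ₀ L₀ κ (2 * N) F H an n x := by
  intro S₁ S₂ _ _ hS₁ hS₂
  obtain ⟨ℬ, h1, h2⟩ := full_all hd hL hℓ hκ hN n x hx S₁ S₂ (.of hS₁) (.of hS₂)
  refine ⟨ℬ, h1, fun b hb => (h2 b hb).1, fun b hb j hj y hy hby => ?_⟩
  by_cases hjn : j ≤ n
  · exact (h2 b hb).2 j hj hjn y hy hby
  · by_contra hc
    refine ht ⟨j, by omega, y, hy, ?_, hc⟩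
    have e1 := (mem_SgAt.1 ((h1.boxes b hb).2.2 (self_mem_boxI _ _))).1
    have e2 := mem_boxI.1 hby
    have e3 := dinf_tri y b.2 x
    have e4 := dinf_comm y b.2
    have e5 := kk_ge (ℓ₀ := ℓ₀) (L₀ := L₀) hκ j
    have e6 := kk_mono (L₀ := L₀) (κ := κ) hℓ (show n ≤ j by omega)
    omega

end fulls

section proba
variable {d : ℕ} {Ω : Type*} {ℓ₀ L₀ κ : ℕ} {F : V d → Set Ω} {H : ℕ → V d → Set Ω}

lemma sum_image_le_aux {α β : Type*} [DecidableEq α] [DecidableEq β] (s : Finset α) (g : α → β)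
    (f : β → ENNReal) : ∑ b ∈ s.image g, f b ≤ ∑ a ∈ s, f (g a) := by
  induction s using Finset.induction_on with
  | empty => simp
  | insert a s ha ih =>
    rw [Finset.image_insert, Finset.sum_insert ha]
    by_cases h : g a ∈ s.image g
    · rw [Finset.insert_eq_of_mem h]; exact ih.trans le_add_self
    · rw [Finset.sum_insert h]; gcongr

lemma sum_union_le_aux {β : Type*} [DecidableEq β] (s t : Finset β) (f : β → ENNReal) :
    ∑ b ∈ s ∪ t, f b ≤ ∑ b ∈ s, f b + ∑ b ∈ t, f b := by
  rw [← Finset.sum_union_inter]; exact le_self_add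

lemma sum_biUnion_le_aux {α β : Type*} [DecidableEq α] [DecidableEq β] (s : Finset α)
    (g : α → Finset β) (f : β → ENNReal) :
    ∑ b ∈ s.biUnion g, f b ≤ ∑ a ∈ s, ∑ b ∈ g a, f b := by
  induction s using Finset.induction_on with
  | empty => simp
  | insert a s ha ih =>
    rw [Finset.biUnion_insert, Finset.sum_insert ha]
    exact (sum_union_le_aux _ _ _).trans (by gcongr)

/-- seed events -/
def BS (F : V d → Set Ω) (H : ℕ → V d → Set Ω) (t : ℕ × V d) : Set Ω :=
  if t.1 = 0 then (F t.2)ᶜ else (H t.1 t.2)ᶜ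

def Zs (d ℓ₀ L₀ : ℕ) (n R : ℕ) (x : V d) : Finset (V d) :=
  (Xann_finite (Lsc ℓ₀ L₀ n) R x).1.toFinset

lemma mem_Zs {n R : ℕ} {x z : V d} : z ∈ Zs d ℓ₀ L₀ n R x ↔
    z ∈ latt d ℓ₀ L₀ n ∧ dinf z x ≤ R * Lsc ℓ₀ L₀ n := by
  unfold Zs; rw [Set.Finite.mem_toFinset]; rfl

lemma card_Zs (n R : ℕ) (x : V d) : (Zs d ℓ₀ L₀ n R x).card ≤ (R + 2) ^ d := by
  have := (Xann_finite (Lsc ℓ₀ L₀ n) R x).2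
  rwa [Set.ncard_eq_toFinset_card _ (Xann_finite (Lsc ℓ₀ L₀ n) R x).1] at this

def Sep (ℓ₀ L₀ κ : ℕ) (T : Finset (ℕ × V d)) : Prop :=
  ∀ t ∈ T, ∀ t' ∈ T, t ≠ t' → t.1 = t'.1 → κ * (2 * Lsc ℓ₀ L₀ t.1 + 1) ≤ 2 * dinf t.2 t'.2

open Classical in
lemma level_indep [MeasurableSpace Ω] {P : Measure Ω} (hC2 : CondC2 d ℓ₀ L₀ κ P F H) (i : ℕ)
    (Q : Finset (V d)) (hQ : ∀ z ∈ Q, z ∈ latt d ℓ₀ L₀ i)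
    (hsep : ∀ z ∈ Q, ∀ z' ∈ Q, z ≠ z' → κ * (2 * Lsc ℓ₀ L₀ i + 1) ≤ 2 * dinf z z')
    {p : ENNReal} (hp : ∀ z ∈ Q, P (BS F H (i, z)) ≤ p) :
    P (⋂ z ∈ Q, BS F H (i, z)) ≤ p ^ Q.card := by
  set s : ℤ := 2 * (Lsc ℓ₀ L₀ i : ℤ) + 1 with hs
  have hs0 : 0 < s := by omega
  set g : V d → V d := fun z j => z j / s with hg
  set e : V d → V d := fun u j => s * u j with he
  have heg : ∀ z ∈ Q, e (g z) = z := by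
    intro z hz
    ext j
    have := hQ z hz j
    simp only [he, hg]
    refine Int.mul_ediv_cancel' ?_
    rw [hs]; push_cast at this; exact this
  set U := Q.image g with hU
  have hUcard : U.card = Q.card := Finset.card_image_of_injOn fun z hz z' hz' h => by
    rw [← heg z hz, ← heg z' hz', h]
  have hUe : ∀ u ∈ U, e u ∈ Q := by
    intro u hu
    obtain ⟨z, hz, rfl⟩ := Finset.mem_image.1 hu
    rw [heg z hz]; exact hz
  have hUsep : ∀ u ∈ U, ∀ v ∈ U, u ≠ v → κ ≤ 2 * dinf u v := by
    intro u hu v hv huv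
    have hne : e u ≠ e v := by
      intro h
      refine huv (funext fun j => ?_)
      have := congrFun h j
      simp only [he] at this
      exact mul_left_cancel₀ hs0.ne' this
    have h1 := hsep _ (hUe u hu) _ (hUe v hv) hne
    have h2 : dinf (e u) (e v) ≤ (2 * Lsc ℓ₀ L₀ i + 1) * dinf u v := by
      refine dinf_le_iff.2 fun j => ?_
      simp only [he]
      rw [← mul_sub, Int.natAbs_mul]
      refine Nat.mul_le_mul ?_ (le_dinf u v j)
      omega
    have h3 : (2 * Lsc ℓ₀ L₀ i + 1) * κ ≤ (2 * Lsc ℓ₀ L₀ i + 1) * (2 * dinf u v) := by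
      calc _ = κ * (2 * Lsc ℓ₀ L₀ i + 1) := by ring
        _ ≤ 2 * dinf (e u) (e v) := h1
        _ ≤ 2 * ((2 * Lsc ℓ₀ L₀ i + 1) * dinf u v) := by omega
        _ = _ := by ring
    exact Nat.le_of_mul_le_mul_left h3 (by omega)
  have hind : iIndep (fun u : U => MeasurableSpace.generateFrom
      {(BS F H (i, e u.1))ᶜ}) P := by
    obtain ⟨h0, h1⟩ := hC2 U hUsep
    by_cases hi : i = 0
    · subst hi
      simpa [BS, he, hs] using (iIndepSet_iff_iIndep _ _).1 h0
    · simpa [BS, he, hs, hi] using (iIndepSet_iff_iIndep _ _).1 (h1 i (by omega))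
  have hmeas := hind.meas_biInter (S := Finset.univ) (s := fun u : U => BS F H (i, e u.1))
    (fun u _ => by
      have h := MeasurableSpace.measurableSet_generateFrom
        (s := {(BS F H (i, e u.1))ᶜ}) (Set.mem_singleton _)
      simpa using h.compl)
  calc P (⋂ z ∈ Q, BS F H (i, z)) ≤ P (⋂ u ∈ (Finset.univ : Finset U), BS F H (i, e u.1)) := by
        refine measure_mono fun ω hω => ?_
        simp only [mem_iInter] at hω ⊢
        exact fun u _ => hω _ (hUe _ u.2)
    _ = ∏ u ∈ (Finset.univ : Finset U), P (BS F H (i, e u.1)) := hmeas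
    _ ≤ ∏ u ∈ (Finset.univ : Finset U), p := Finset.prod_le_prod' fun u _ => hp _ (hUe _ u.2)
    _ = p ^ Q.card := by simp [hUcard]

open Classical in
lemma seeds_indep [MeasurableSpace Ω] {P : Measure Ω} (hC1 : CondC1 d ℓ₀ L₀ P F H)
    (hC2 : CondC2 d ℓ₀ L₀ κ P F H)
    {p : ℕ → ENNReal} (hp : ∀ i, ∀ z ∈ latt d ℓ₀ L₀ i, P (BS F H (i, z)) ≤ p i)
    (T : Finset (ℕ × V d)) (hT : ∀ t ∈ T, t.2 ∈ latt d ℓ₀ L₀ t.1) (hsep : Sep ℓ₀ L₀ κ T) :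
    P (⋂ t ∈ T, BS F H t) ≤ ∏ t ∈ T, p t.1 := by
  set Q : ℕ → Finset (V d) := fun i => (T.filter fun t => t.1 = i).image Prod.snd with hQ
  have hmQ : ∀ i z, z ∈ Q i ↔ (i, z) ∈ T := by
    intro i z
    simp only [hQ, Finset.mem_image, Finset.mem_filter]
    constructor
    · rintro ⟨⟨j, z'⟩, ⟨h1, h2⟩, h3⟩
      simp only at h2 h3; subst h2 h3; exact h1
    · intro h; exact ⟨(i, z), ⟨h, rfl⟩, rfl⟩
  have hmeas := iIndep.meas_biInter (S := T.image Prod.fst)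
    (s := fun i => ⋂ z ∈ Q i, BS F H (i, z)) hC1 (fun i _ => by
      refine Finset.measurableSet_biInter _ fun z hz => ?_
      have hzl : z ∈ latt d ℓ₀ L₀ i := hT _ ((hmQ i z).1 hz)
      by_cases hi : i = 0
      · subst hi
        simp only [BS, if_true]
        refine MeasurableSet.compl (MeasurableSpace.measurableSet_generateFrom ?_)
        rw [if_pos rfl]
        exact ⟨z, hzl, rfl⟩
      · simp only [BS, if_neg hi]
        refine MeasurableSet.compl (MeasurableSpace.measurableSet_generateFrom ?_)
        rw [if_neg hi]
        exact ⟨z, hzl, rfl⟩)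
  calc P (⋂ t ∈ T, BS F H t) ≤ P (⋂ i ∈ T.image Prod.fst, ⋂ z ∈ Q i, BS F H (i, z)) := by
        refine measure_mono fun ω hω => ?_
        simp only [mem_iInter] at hω ⊢
        exact fun i _ z hz => hω _ ((hmQ i z).1 hz)
    _ = ∏ i ∈ T.image Prod.fst, P (⋂ z ∈ Q i, BS F H (i, z)) := hmeas
    _ ≤ ∏ i ∈ T.image Prod.fst, p i ^ (Q i).card := by
        refine Finset.prod_le_prod' fun i _ => ?_
        refine level_indep hC2 i (Q i) (fun z hz => hT _ ((hmQ i z).1 hz)) ?_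
          (fun z hz => hp i z (hT _ ((hmQ i z).1 hz)))
        intro z hz z' hz' hne
        exact hsep _ ((hmQ i z).1 hz) _ ((hmQ i z').1 hz') (by simpa using hne) rfl
    _ = ∏ i ∈ T.image Prod.fst, ∏ t ∈ T.filter (fun t => t.1 = i), p t.1 := by
        refine Finset.prod_congr rfl fun i _ => ?_
        have h1 : (Q i).card = (T.filter fun t => t.1 = i).card := by
          refine Finset.card_image_of_injOn ?_
          rintro ⟨a, b⟩ h ⟨a', b'⟩ h' hb
          simp only [Finset.coe_filter, Set.mem_ofPred_eq] at h h' hb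
          rw [h.2, h'.2, hb]
        rw [h1, Finset.prod_congr rfl (fun t ht => by rw [(Finset.mem_filter.1 ht).2]),
          Finset.prod_const]
    _ = ∏ t ∈ T, p t.1 :=
        Finset.prod_fiberwise_of_maps_to (fun t ht => Finset.mem_image_of_mem _ ht) _

open Classical in
lemma patterns (hL : 1 ≤ L₀) (hℓ : 1000 ≤ ℓ₀) (hκ : 20 ≤ κ) {p : ℕ → ENNReal} {c η : ENNReal}
    (hpn : ∀ n, p (n + 1) ≤ c * (1 / 2) ^ 2 ^ (n + 1))
    {M : ℕ} (hM : (9 * κ * ℓ₀ + 2) ^ d ≤ M) (hM' : (10 * κ + 2) ^ d ≤ M)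
    (h0 : (M : ENNReal) * p 0 ≤ η * (1 / 2)) (h1 : (M : ENNReal) * c + (M * η) ^ 2 ≤ η) (n : ℕ) :
    ∀ x : V d, ∃ 𝒯 : Finset (Finset (ℕ × V d)),
      (∀ ω, Bad ℓ₀ L₀ κ F H ω n x → ∃ T ∈ 𝒯, ∀ t ∈ T, ω ∈ BS F H t) ∧
      (∀ T ∈ 𝒯, (∀ t ∈ T, t.1 ≤ n ∧ t.2 ∈ latt d ℓ₀ L₀ t.1 ∧ dinf t.2 x ≤ 10 * kk ℓ₀ L₀ κ n) ∧
        Sep ℓ₀ L₀ κ T) ∧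
      ∑ T ∈ 𝒯, ∏ t ∈ T, p t.1 ≤ η * (1 / 2) ^ 2 ^ n := by
  have hkL : ∀ m, 10 * kk ℓ₀ L₀ κ m = 10 * κ * Lsc ℓ₀ L₀ m := fun m => by unfold kk; ring
  -- single seeds
  have singles : ∀ m (x : V d), ∃ 𝒯 : Finset (Finset (ℕ × V d)),
      (∀ z ∈ latt d ℓ₀ L₀ m, dinf z x ≤ 10 * kk ℓ₀ L₀ κ m → {(m, z)} ∈ 𝒯) ∧
      (∀ T ∈ 𝒯, (∀ t ∈ T, t.1 ≤ m ∧ t.2 ∈ latt d ℓ₀ L₀ t.1 ∧ dinf t.2 x ≤ 10 * kk ℓ₀ L₀ κ m) ∧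
        Sep ℓ₀ L₀ κ T) ∧
      ∑ T ∈ 𝒯, ∏ t ∈ T, p t.1 ≤ M * p m := by
    intro m x
    refine ⟨(Zs d ℓ₀ L₀ m (10 * κ) x).image fun z => {(m, z)}, ?_, ?_, ?_⟩
    · intro z hz hzx
      exact Finset.mem_image.2 ⟨z, mem_Zs.2 ⟨hz, by rw [← hkL]; exact hzx⟩, rfl⟩
    · intro T hT
      obtain ⟨z, hz, rfl⟩ := Finset.mem_image.1 hT
      rw [mem_Zs, ← hkL] at hz
      constructor
      · intro t ht
        rw [Finset.mem_singleton] at ht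
        subst ht
        exact ⟨le_rfl, hz⟩
      · intro t ht t' ht' hne
        rw [Finset.mem_singleton] at ht ht'
        exact absurd (ht.trans ht'.symm) hne
    · refine (sum_image_le_aux _ _ _).trans ?_
      simp only [Finset.prod_singleton, Finset.sum_const, nsmul_eq_mul]
      gcongr
      exact (card_Zs m (10 * κ) x).trans hM'
  induction n with
  | zero =>
    intro x
    obtain ⟨𝒯, e1, e2, e3⟩ := singles 0 x
    refine ⟨𝒯, ?_, e2, e3.trans (by simpa using h0)⟩
    rintro ω ⟨z, hz, hzx, hω⟩
    refine ⟨_, e1 z hz hzx, fun t ht => ?_⟩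
    rw [Finset.mem_singleton] at ht
    subst ht
    simpa [BS] using hω
  | succ n ih =>
    intro x
    obtain ⟨𝒯₀, e1, e2, e3⟩ := singles (n + 1) x
    choose 𝒯 f1 f2 f3 using ih
    set K := kk ℓ₀ L₀ κ (n + 1) with hK
    set Z := Zs d ℓ₀ L₀ n (9 * κ * ℓ₀) x with hZ
    set A₁ := Z.filter fun z => 171 * K ≤ 20 * dinf z x ∧ 20 * dinf z x ≤ 174 * K with hA₁
    set A₂ := Z.filter fun z => 176 * K ≤ 20 * dinf z x ∧ 20 * dinf z x ≤ 179 * K with hA₂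
    have hk := kk_succ (L₀ := L₀) (κ := κ) hℓ n
    have hkL0 := kk_ge (ℓ₀ := ℓ₀) (L₀ := L₀) hκ n
    have hL0 := Lsc_pos hℓ hL n
    have hZmem : ∀ z ∈ latt d ℓ₀ L₀ n, 20 * dinf z x ≤ 179 * K → z ∈ Z := by
      intro z hz hzx
      refine mem_Zs.2 ⟨hz, ?_⟩
      have : 9 * κ * ℓ₀ * Lsc ℓ₀ L₀ n = 9 * K := by rw [hK, kk_succ_eq]; unfold kk; ring
      rw [this]; omega
    have hcard : ∀ A ⊆ Z, ∑ T ∈ A.biUnion 𝒯, ∏ t ∈ T, p t.1 ≤ M * η * (1 / 2) ^ 2 ^ n := by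
      intro A hA
      refine (sum_biUnion_le_aux _ _ _).trans ?_
      refine (Finset.sum_le_sum fun z _ => f3 z).trans ?_
      rw [Finset.sum_const, nsmul_eq_mul, mul_assoc]
      gcongr
      exact (Finset.card_le_card hA).trans ((card_Zs _ _ _).trans hM)
    have hsepc : ∀ T₁ ∈ A₁.biUnion 𝒯, ∀ T₂ ∈ A₂.biUnion 𝒯, ∀ t₁ ∈ T₁, ∀ t₂ ∈ T₂,
        80 * kk ℓ₀ L₀ κ n ≤ dinf t₁.2 t₂.2 := by
      intro T₁ hT₁ T₂ hT₂ t₁ ht₁ t₂ ht₂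
      obtain ⟨z₁, hz₁, hT₁⟩ := Finset.mem_biUnion.1 hT₁
      obtain ⟨z₂, hz₂, hT₂⟩ := Finset.mem_biUnion.1 hT₂
      have g1 := (Finset.mem_filter.1 hz₁).2.2
      have g2 := (Finset.mem_filter.1 hz₂).2.1
      have g3 := ((f2 z₁ T₁ hT₁).1 t₁ ht₁).2.2
      have g4 := ((f2 z₂ T₂ hT₂).1 t₂ ht₂).2.2
      have g5 := dinf_tri z₂ t₂.2 x
      have g6 := dinf_tri t₂.2 t₁.2 x
      have g7 := dinf_tri t₁.2 z₁ x
      have g8 := dinf_comm z₂ t₂.2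
      have g9 := dinf_comm t₂.2 t₁.2
      omega
    have hloc : ∀ A ⊆ Z, (∀ z ∈ A, 20 * dinf z x ≤ 179 * K) → ∀ T ∈ A.biUnion 𝒯,
        (∀ t ∈ T, t.1 ≤ n ∧ t.2 ∈ latt d ℓ₀ L₀ t.1 ∧ dinf t.2 x ≤ 10 * K) ∧ Sep ℓ₀ L₀ κ T := by
      intro A hA hA' T hT
      obtain ⟨z, hz, hT⟩ := Finset.mem_biUnion.1 hT
      refine ⟨fun t ht => ?_, (f2 z T hT).2⟩
      obtain ⟨g1, g2, g3⟩ := (f2 z T hT).1 t ht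
      refine ⟨g1, g2, ?_⟩
      have g4 := hA' z hz
      have g5 := dinf_tri t.2 z x
      omega
    have hloc1 := hloc A₁ (Finset.filter_subset _ _) (fun z hz => by
      have := (Finset.mem_filter.1 hz).2.2; omega)
    have hloc2 := hloc A₂ (Finset.filter_subset _ _) (fun z hz => by
      have := (Finset.mem_filter.1 hz).2.2; omega)
    refine ⟨𝒯₀ ∪ ((A₁.biUnion 𝒯) ×ˢ (A₂.biUnion 𝒯)).image fun q => q.1 ∪ q.2, ?_, ?_, ?_⟩
    · rintro ω (⟨z, hz, hzx, hω⟩ | ⟨z₁, hz₁, z₂, hz₂, hd₁, hd₂, hB₁, hB₂⟩)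
      · refine ⟨_, Finset.mem_union_left _ (e1 z hz hzx), fun t ht => ?_⟩
        rw [Finset.mem_singleton] at ht
        subst ht
        simpa [BS] using hω
      · obtain ⟨T₁, hT₁, hω₁⟩ := f1 z₁ ω hB₁
        obtain ⟨T₂, hT₂, hω₂⟩ := f1 z₂ ω hB₂
        refine ⟨T₁ ∪ T₂, Finset.mem_union_right _ (Finset.mem_image.2 ⟨(T₁, T₂),
          Finset.mem_product.2 ⟨Finset.mem_biUnion.2 ⟨z₁, ?_, hT₁⟩,
            Finset.mem_biUnion.2 ⟨z₂, ?_, hT₂⟩⟩, rfl⟩), fun t ht => ?_⟩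
        · exact Finset.mem_filter.2 ⟨hZmem z₁ hz₁ (by omega), hd₁⟩
        · exact Finset.mem_filter.2 ⟨hZmem z₂ hz₂ (by omega), hd₂⟩
        · rcases Finset.mem_union.1 ht with ht | ht
          · exact hω₁ t ht
          · exact hω₂ t ht
    · intro T hT
      rcases Finset.mem_union.1 hT with hT | hT
      · exact e2 T hT
      obtain ⟨⟨T₁, T₂⟩, hq, rfl⟩ := Finset.mem_image.1 hT
      obtain ⟨hT₁, hT₂⟩ := Finset.mem_product.1 hq
      simp only at hT₁ hT₂
      obtain ⟨l1, s1⟩ := hloc1 T₁ hT₁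
      obtain ⟨l2, s2⟩ := hloc2 T₂ hT₂
      have cr : ∀ t₁ ∈ T₁, ∀ t₂ ∈ T₂, ∀ m ≤ n,
          κ * (2 * Lsc ℓ₀ L₀ m + 1) ≤ 2 * dinf t₁.2 t₂.2 := by
        intro t₁ ht₁ t₂ ht₂ m hm
        have g1 := hsepc T₁ hT₁ T₂ hT₂ t₁ ht₁ t₂ ht₂
        have g2 := kk_mono (L₀ := L₀) (κ := κ) hℓ hm
        have g3 := Lsc_pos hℓ hL m
        have g4 : κ * (2 * Lsc ℓ₀ L₀ m + 1) ≤ κ * (3 * Lsc ℓ₀ L₀ m) :=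
          Nat.mul_le_mul_left _ (by omega)
        have g5 : κ * (3 * Lsc ℓ₀ L₀ m) = 3 * kk ℓ₀ L₀ κ m := by unfold kk; ring
        omega
      constructor
      · intro t ht
        rcases Finset.mem_union.1 ht with ht | ht
        · exact ⟨(l1 t ht).1.trans (by omega), (l1 t ht).2⟩
        · exact ⟨(l2 t ht).1.trans (by omega), (l2 t ht).2⟩
      · intro t ht t' ht' hne hlev
        rcases Finset.mem_union.1 ht with ht | ht <;> rcases Finset.mem_union.1 ht' with ht' | ht'
        · exact s1 t ht t' ht' hne hlev
        · exact cr t ht t' ht' _ (l1 t ht).1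
        · rw [dinf_comm]; exact cr t' ht' t ht _ (l2 t ht).1
        · exact s2 t ht t' ht' hne hlev
    · refine (sum_union_le_aux _ _ _).trans ?_
      have q1 : ∑ T ∈ ((A₁.biUnion 𝒯) ×ˢ (A₂.biUnion 𝒯)).image (fun q => q.1 ∪ q.2),
          ∏ t ∈ T, p t.1 ≤ (M * η * (1 / 2) ^ 2 ^ n) * (M * η * (1 / 2) ^ 2 ^ n) := by
        refine (sum_image_le_aux _ _ _).trans ?_
        calc ∑ q ∈ (A₁.biUnion 𝒯) ×ˢ (A₂.biUnion 𝒯), ∏ t ∈ q.1 ∪ q.2, p t.1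
            = ∑ q ∈ (A₁.biUnion 𝒯) ×ˢ (A₂.biUnion 𝒯), (∏ t ∈ q.1, p t.1) * ∏ t ∈ q.2, p t.1 := by
              refine Finset.sum_congr rfl fun q hq => Finset.prod_union ?_
              obtain ⟨hT₁, hT₂⟩ := Finset.mem_product.1 hq
              refine Finset.disjoint_left.2 fun t ht₁ ht₂ => ?_
              have := hsepc _ hT₁ _ hT₂ t ht₁ t ht₂
              rw [dinf_self] at this
              omega
          _ = (∑ T ∈ A₁.biUnion 𝒯, ∏ t ∈ T, p t.1) * ∑ T ∈ A₂.biUnion 𝒯, ∏ t ∈ T, p t.1 := by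
              rw [Finset.sum_mul_sum, Finset.sum_product]
          _ ≤ _ := mul_le_mul' (hcard A₁ (Finset.filter_subset _ _))
              (hcard A₂ (Finset.filter_subset _ _))
      refine (add_le_add (e3.trans (mul_le_mul_right (hpn n) _)) q1).trans ?_
      have q2 : (M : ENNReal) * (c * (1 / 2) ^ 2 ^ (n + 1)) +
          (M * η * (1 / 2) ^ 2 ^ n) * (M * η * (1 / 2) ^ 2 ^ n) =
          (M * c + (M * η) ^ 2) * (1 / 2) ^ 2 ^ (n + 1) := by
        rw [pow_succ 2 n, pow_mul]; ring
      rw [q2]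
      gcongr

lemma prob_bad [MeasurableSpace Ω] {P : Measure Ω} (hC1 : CondC1 d ℓ₀ L₀ P F H)
    (hC2 : CondC2 d ℓ₀ L₀ κ P F H)
    (hL : 1 ≤ L₀) (hℓ : 1000 ≤ ℓ₀) (hκ : 20 ≤ κ) {p : ℕ → ENNReal} {c η : ENNReal}
    (hp : ∀ i, ∀ z ∈ latt d ℓ₀ L₀ i, P (BS F H (i, z)) ≤ p i)
    (hpn : ∀ n, p (n + 1) ≤ c * (1 / 2) ^ 2 ^ (n + 1))
    {M : ℕ} (hM : (9 * κ * ℓ₀ + 2) ^ d ≤ M) (hM' : (10 * κ + 2) ^ d ≤ M)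
    (h0 : (M : ENNReal) * p 0 ≤ η * (1 / 2)) (h1 : (M : ENNReal) * c + (M * η) ^ 2 ≤ η) (n : ℕ)
    (x : V d) : P {ω | Bad ℓ₀ L₀ κ F H ω n x} ≤ η * (1 / 2) ^ 2 ^ n := by
  obtain ⟨𝒯, e1, e2, e3⟩ := patterns (F := F) (H := H) hL hℓ hκ hpn hM hM' h0 h1 n x
  calc P {ω | Bad ℓ₀ L₀ κ F H ω n x} ≤ P (⋃ T ∈ 𝒯, ⋂ t ∈ T, BS F H t) := by
        refine measure_mono fun ω hω => ?_
        obtain ⟨T, hT, hω⟩ := e1 ω hω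
        simp only [mem_iUnion, mem_iInter]
        exact ⟨T, hT, hω⟩
    _ ≤ ∑ T ∈ 𝒯, P (⋂ t ∈ T, BS F H t) := measure_biUnion_finset_le _ _
    _ ≤ ∑ T ∈ 𝒯, ∏ t ∈ T, p t.1 := Finset.sum_le_sum fun T hT =>
        seeds_indep hC1 hC2 hp T (fun t ht => ((e2 T hT).1 t ht).2.1) (e2 T hT).2
    _ ≤ _ := e3

lemma prob_tail [MeasurableSpace Ω] {P : Measure Ω} {p : ℕ → ENNReal} {c : ENNReal}
    (hp : ∀ i, ∀ z ∈ latt d ℓ₀ L₀ i, P (BS F H (i, z)) ≤ p i)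
    (hpn : ∀ n, p (n + 1) ≤ c * (1 / 2) ^ 2 ^ (n + 1))
    {M : ℕ} (hM' : (10 * κ + 2) ^ d ≤ M) (n : ℕ) (x : V d) :
    P {ω | TailBad ℓ₀ L₀ κ H ω n x} ≤ M * c * (1 / 2) ^ 2 ^ n := by
  have hexp : ∀ i, 2 ^ n + (i + 1) ≤ 2 ^ (n + i + 1) := by
    intro i
    have g1 : 1 ≤ 2 ^ n := Nat.one_le_two_pow
    have g2 : i + 1 < 2 ^ (i + 1) := Nat.lt_two_pow_self
    rw [add_assoc, pow_add]
    nlinarith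
  calc P {ω | TailBad ℓ₀ L₀ κ H ω n x}
      ≤ P (⋃ i : ℕ, ⋃ z ∈ Zs d ℓ₀ L₀ (n + i + 1) (10 * κ) x, BS F H (n + i + 1, z)) := by
        refine measure_mono ?_
        rintro ω ⟨j, hj, z, hz, hzx, hω⟩
        obtain ⟨i, rfl⟩ : ∃ i, j = n + i + 1 := ⟨j - n - 1, by omega⟩
        simp only [mem_iUnion]
        refine ⟨i, z, mem_Zs.2 ⟨hz, ?_⟩, by simpa [BS] using hω⟩
        unfold kk at hzx; rw [mul_assoc]; exact hzx
    _ ≤ ∑' i : ℕ, P (⋃ z ∈ Zs d ℓ₀ L₀ (n + i + 1) (10 * κ) x, BS F H (n + i + 1, z)) :=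
        measure_iUnion_le _
    _ ≤ ∑' i : ℕ, M * c * (1 / 2) ^ 2 ^ n * (1 / 2) ^ (i + 1) := by
        refine ENNReal.tsum_le_tsum fun i => ?_
        refine (measure_biUnion_finset_le _ _).trans ?_
        refine (Finset.sum_le_sum fun z hz => hp _ z (mem_Zs.1 hz).1).trans ?_
        rw [Finset.sum_const, nsmul_eq_mul]
        calc _ ≤ (M : ENNReal) * (c * (1 / 2) ^ 2 ^ (n + i + 1)) := by
              refine mul_le_mul' ?_ (hpn _)
              exact_mod_cast (card_Zs _ _ _).trans hM'
          _ ≤ (M : ENNReal) * (c * (1 / 2) ^ (2 ^ n + (i + 1))) := by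
              refine mul_le_mul' le_rfl (mul_le_mul' le_rfl ?_)
              exact pow_le_pow_right_of_le_one' (by simp) (hexp i)
          _ = _ := by rw [pow_add]; ring
    _ = M * c * (1 / 2) ^ 2 ^ n := by
        rw [ENNReal.tsum_mul_left, ENNReal.tsum_geometric_add_one, one_div,
          ENNReal.one_sub_inv_two, inv_inv, ENNReal.inv_mul_cancel (by simp) (by simp), mul_one]

end proba

/-- Theorem 2.3: existence of good bridges with overwhelming probability. -/
theorem good_bridges (d : ℕ) (hd : 3 ≤ d) (κ : ℕ) (hκ : 20 ≤ κ) :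
    ∃ C : ℕ, ∀ ℓ₀ : ℕ, C ≤ ℓ₀ →
      ∃ K : ℕ, 100 ≤ K ∧ ∃ c₁ c₂ : ℝ, c₁ ∈ Set.Ioo (0 : ℝ) 1 ∧ c₂ ∈ Set.Ioo (0 : ℝ) 1 ∧
        ∃ C' : ℕ, ∀ L₀ : ℕ, C' ≤ L₀ →
          ∀ {Ω : Type} [MeasurableSpace Ω] (P : Measure Ω), IsProbabilityMeasure P →
            ∀ (F : V d → Set Ω) (H : ℕ → V d → Set Ω),
              CondC1 d ℓ₀ L₀ P F H → CondC2 d ℓ₀ L₀ κ P F H →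
              (∀ x ∈ latt d ℓ₀ L₀ 0, P (F x)ᶜ ≤ ENNReal.ofReal c₁) →
              (∀ n : ℕ, 1 ≤ n → ∀ x ∈ latt d ℓ₀ L₀ n,
                P (H n x)ᶜ ≤ ENNReal.ofReal (c₂ / 2 ^ 2 ^ n)) →
              ∀ (annulus : Bool) (n : ℕ), ∀ x ∈ latt d ℓ₀ L₀ n,
                1 - (1 / 2 : ENNReal) ^ 2 ^ n ≤
                  P (GEvent d ℓ₀ L₀ κ K F H annulus n x) := by
  refine ⟨1000, fun ℓ₀ hℓ => ?_⟩
  set M : ℕ := (9 * κ * ℓ₀ + 2) ^ d with hMdef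
  have hM100 : 100 ≤ M := by
    have h1 : 9 * 20 * 1000 ≤ 9 * κ * ℓ₀ := Nat.mul_le_mul (Nat.mul_le_mul_left _ hκ) hℓ
    calc 100 ≤ (9 * κ * ℓ₀ + 2) ^ 1 := by rw [pow_one]; omega
      _ ≤ M := Nat.pow_le_pow_right (by omega) (by omega)
  have hM' : (10 * κ + 2) ^ d ≤ M := by
    refine Nat.pow_le_pow_left ?_ d
    have h1 : 9 * κ * 1000 ≤ 9 * κ * ℓ₀ := Nat.mul_le_mul_left _ hℓ
    omega
  have hMr : (100 : ℝ) ≤ M := by exact_mod_cast hM100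
  have hM0 : (0 : ℝ) < M := by linarith
  set c : ℝ := 1 / (4 * (M : ℝ) ^ 3) with hc
  have hc0 : 0 < c := by positivity
  have hc1 : c < 1 := by
    rw [hc, div_lt_one (by positivity)]
    have : (1 : ℝ) ≤ (M : ℝ) ^ 3 := one_le_pow₀ (by linarith)
    linarith
  set η : ℝ := 1 / (2 * (M : ℝ) ^ 2) with hη
  have hη0 : 0 < η := by positivity
  have hη1 : η ≤ 1 / 2 := by
    rw [hη]
    have : (1 : ℝ) ≤ (M : ℝ) ^ 2 := one_le_pow₀ (by linarith)
    exact one_div_le_one_div_of_le (by norm_num) (by linarith)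
  have hMc : (M : ℝ) * c = η * (1 / 2) := by
    rw [hc, hη]; field_simp <;> norm_num
  have hMη : ((M : ℝ) * η) ^ 2 = η * (1 / 2) := by
    rw [hη]; field_simp <;> norm_num
  refine ⟨2 * M, by omega, c, c, ⟨hc0, hc1⟩, ⟨hc0, hc1⟩, 1, ?_⟩
  intro L₀ hL Ω _ P hP F H hC1 hC2 hF hH an n x _
  have hMe : (M : ENNReal) = ENNReal.ofReal (M : ℝ) := (ENNReal.ofReal_natCast M).symm
  have half : (1 / 2 : ENNReal) = ENNReal.ofReal (1 / 2) := by
    rw [ENNReal.ofReal_div_of_pos (by norm_num)]; simp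
  have eMc : (M : ENNReal) * ENNReal.ofReal c = ENNReal.ofReal (η * (1 / 2)) := by
    rw [hMe, ← ENNReal.ofReal_mul hM0.le, hMc]
  set p : ℕ → ENNReal := fun i =>
    if i = 0 then ENNReal.ofReal c else ENNReal.ofReal (c / 2 ^ 2 ^ i) with hpdef
  have hp : ∀ i, ∀ z ∈ latt d ℓ₀ L₀ i, P (BS F H (i, z)) ≤ p i := by
    intro i z hz
    by_cases hi : i = 0
    · subst hi; simpa [BS, hpdef] using hF z hz
    · simpa [BS, hpdef, hi] using hH i (by omega) z hz
  have hpn : ∀ n, p (n + 1) ≤ ENNReal.ofReal c * (1 / 2) ^ 2 ^ (n + 1) := by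
    intro n
    simp only [hpdef, Nat.succ_ne_zero, if_false]
    rw [half, ← ENNReal.ofReal_pow (by norm_num), ← ENNReal.ofReal_mul hc0.le]
    refine ENNReal.ofReal_le_ofReal (le_of_eq ?_)
    rw [div_pow, one_pow]; ring
  have h0 : (M : ENNReal) * p 0 ≤ ENNReal.ofReal η * (1 / 2) := by
    simp only [hpdef, if_true]
    rw [eMc, half, ← ENNReal.ofReal_mul hη0.le]
  have h1 : (M : ENNReal) * ENNReal.ofReal c + (M * ENNReal.ofReal η) ^ 2 ≤ ENNReal.ofReal η := by
    rw [eMc, hMe, ← ENNReal.ofReal_mul hM0.le, ← ENNReal.ofReal_pow (by positivity), hMη,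
      ← ENNReal.ofReal_add (by positivity) (by positivity)]
    exact ENNReal.ofReal_le_ofReal (by linarith)
  have b1 := prob_bad hC1 hC2 hL hℓ hκ hp hpn le_rfl hM' h0 h1 n x
  have b2 := prob_tail (κ := κ) hp hpn hM' n x
  have hsub : (GEvent d ℓ₀ L₀ κ (2 * M) F H an n x)ᶜ ⊆
      {ω | Bad ℓ₀ L₀ κ F H ω n x} ∪ {ω | TailBad ℓ₀ L₀ κ H ω n x} := by
    intro ω hω
    by_contra hcon
    rw [mem_union, not_or] at hcon
    exact hω (gevent_of (by omega) hL hℓ hκ le_rfl hcon.1 hcon.2 an)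
  have hcomp : P (GEvent d ℓ₀ L₀ κ (2 * M) F H an n x)ᶜ ≤ (1 / 2) ^ 2 ^ n := by
    refine (measure_mono hsub).trans ((measure_union_le _ _).trans ((add_le_add b1 b2).trans ?_))
    rw [← add_mul, eMc, ← ENNReal.ofReal_add hη0.le (by positivity)]
    have h2 : ENNReal.ofReal (η + η * (1 / 2)) ≤ 1 := by
      rw [← ENNReal.ofReal_one]
      exact ENNReal.ofReal_le_ofReal (by linarith)
    calc _ ≤ 1 * (1 / 2 : ENNReal) ^ 2 ^ n := mul_le_mul' h2 le_rfl
      _ = _ := one_mul _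
  rw [tsub_le_iff_right]
  calc (1 : ENNReal) = P univ := measure_univ.symm
    _ = P (GEvent d ℓ₀ L₀ κ (2 * M) F H an n x ∪ (GEvent d ℓ₀ L₀ κ (2 * M) F H an n x)ᶜ) := by
        rw [union_compl_self]
    _ ≤ _ := (measure_union_le _ _).trans (add_le_add le_rfl hcomp)

end
end GFFperc
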